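/- arXiv:2509.03197 — 3 statements merged into one kernel-verified Lean document; each statement's English description precedes it below -/
import Mathlib

section
/- Fix s ∈ ℂ with Re s > 1. For w ∈ ℂ with Re w > 3/4 and w ≠ 1, the series F(w) := Σ_{n odd ≥ 1} χ₈(n) · L(w, χ⁽⁴ⁿ⁾) · a_{2w}(4n) · n^{−s} converges absolutely, and (w−1)·F(w) tends to (2/3)·ζ(2s)·(1−2^{−2s})·∏_{p>2 prime}(1 − 1/(p^{2s}(p+1))) as w → 1 within {w : Re w > 3/4, w ≠ 1}. -/
open Complex Filter Topology

noncomputable section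

/-- `a_t(m) = ∏_{p | m} (1 - p^{-t})^{-1}`. -/
def aF (t : ℂ) (m : ℕ) : ℂ := ∏ p ∈ m.primeFactors, (1 - (p : ℂ) ^ (-t))⁻¹

lemma jac_val_intCast (a : ℕ) [NeZero a] (x : ℤ) :
    jacobiSym (((x : ZMod a).val : ℕ) : ℤ) a = jacobiSym x a := by
  apply jacobiSym.mod_left'
  rw [ZMod.val_intCast]
  simp

/-- Jacobi symbol as a Dirichlet character. -/
def jchar (a : ℕ) [NeZero a] : DirichletCharacter ℂ a where
  toFun x := ((jacobiSym (x.val : ℤ) a : ℤ) : ℂ)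
  map_one' := by
    have := jac_val_intCast a 1
    simp only [Int.cast_one] at this
    rw [this]; simp
  map_mul' x y := by
    have h := jac_val_intCast a ((x.val : ℤ) * (y.val : ℤ))
    have e : (((x.val : ℤ) * (y.val : ℤ) : ℤ) : ZMod a) = x * y := by
      push_cast; simp
    rw [e] at h
    rw [h, jacobiSym.mul_left, Int.cast_mul]
  map_nonunit' x hx := by
    have : jacobiSym (x.val : ℤ) a = 0 := by
      rw [jacobiSym.eq_zero_iff_not_coprime]
      intro h
      apply hx
      have h2 : Nat.Coprime x.val a := h
      have := (ZMod.isUnit_iff_coprime x.val a).2 h2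
      simpa using this
    rw [this]; simp

lemma jchar_intCast (a : ℕ) [NeZero a] (x : ℤ) :
    jchar a (x : ZMod a) = ((jacobiSym x a : ℤ) : ℂ) := by
  have := jac_val_intCast a x
  change ((jacobiSym (((x : ZMod a).val : ℕ) : ℤ) a : ℤ) : ℂ) = _
  rw [this]

lemma jchar_inv (a : ℕ) [NeZero a] : (jchar a)⁻¹ = jchar a := by
  have : (jchar a) * jchar a = 1 := by
    ext u
    rw [MulChar.mul_apply, MulChar.one_apply_coe]
    have hu : IsCoprime ((u : ZMod a).val : ℤ) (a : ℤ) := by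
      rw [Nat.isCoprime_iff_coprime]
      exact ZMod.val_coe_unit_coprime u
    have h2 := jacobiSym.sq_one (Int.isCoprime_iff_gcd_eq_one.1 hu)
    change ((jacobiSym (((u : ZMod a).val : ℕ) : ℤ) a : ℤ) : ℂ) * ((jacobiSym (((u : ZMod a).val : ℕ) : ℤ) a : ℤ) : ℂ) = 1
    rw [← Int.cast_mul, ← sq, h2]; simp
  exact inv_eq_of_mul_eq_one_left this

lemma jchar_primitive (a : ℕ) [NeZero a] (ha : Odd a) (hsq : Squarefree a) :
    (jchar a).IsPrimitive := by
  rw [DirichletCharacter.isPrimitive_def]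
  by_contra hne
  set d := (jchar a).conductor with hd
  have hda : d ∣ a := DirichletCharacter.conductor_dvd_level _
  obtain ⟨c, hc⟩ := hda
  have hc1 : c ≠ 1 := by
    rintro rfl
    apply hne; omega
  obtain ⟨p, hp, q, hq⟩ := Nat.exists_prime_and_dvd hc1
  have hab : a = p * (d * q) := by rw [hc, hq]; ring
  have hcop : Nat.Coprime p (d * q) := by
    have := hab ▸ hsq
    exact Nat.coprime_of_squarefree_mul this
  have := Fact.mk hp
  have hp2 : p ≠ 2 := by
    rintro rfl
    rw [hab] at ha
    exact (Nat.not_odd_iff_even.2 (even_two_mul _)) ha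
  obtain ⟨u, hu⟩ := quadraticChar_exists_neg_one (F := ZMod p) (by rw [ZMod.ringChar_zmod_n]; exact hp2)
  obtain ⟨x, hx1, hx2⟩ := Nat.chineseRemainder hcop u.val 1
  have hJ : jacobiSym (x : ℤ) a = -1 := by
    have hdq : d * q ≠ 0 := by
      intro h0; rw [h0] at hab; exact NeZero.ne a (by simpa using hab)
    rw [hab, jacobiSym.mul_right' _ hp.ne_zero hdq]
    have e1 : jacobiSym (x : ℤ) p = -1 := by
      rw [← jacobiSym.legendreSym.to_jacobiSym, legendreSym]
      rw [← hu]
      congr 1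
      have := (ZMod.natCast_eq_natCast_iff _ _ _).2 hx1
      simpa using this
    have e2 : jacobiSym (x : ℤ) (d * q) = 1 := by
      rw [← jacobiSym.one_left (d * q)]
      apply jacobiSym.mod_left'
      exact_mod_cast hx2
    rw [e1, e2]; norm_num
  have hxcop : Nat.Coprime x a := by
    by_contra hcon
    have : jacobiSym (x : ℤ) a = 0 := by
      rw [jacobiSym.eq_zero_iff_not_coprime]
      simpa [Int.gcd] using hcon
    omega
  have hft := DirichletCharacter.factorsThrough_conductor (jchar a)
  rw [DirichletCharacter.factorsThrough_iff_ker_unitsMap (DirichletCharacter.conductor_dvd_level _)] at hft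
  have hmem : ZMod.unitOfCoprime x hxcop ∈ (ZMod.unitsMap (DirichletCharacter.conductor_dvd_level (jchar a))).ker := by
    rw [MonoidHom.mem_ker]
    ext
    rw [ZMod.unitsMap_val]
    simp only [ZMod.coe_unitOfCoprime, Units.val_one]
    rw [ZMod.cast_natCast (DirichletCharacter.conductor_dvd_level (jchar a))]
    have : x ≡ 1 [MOD d] := hx2.of_mul_right q
    have := (ZMod.natCast_eq_natCast_iff _ _ _).2 this
    simpa using this
  have h3 := hft hmem
  rw [MonoidHom.mem_ker] at h3
  have h4 : jchar a (x : ZMod a) = 1 := by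
    have := congrArg Units.val h3
    simpa using this
  have h5 := jchar_intCast a x
  rw [hJ] at h5
  simp only [Int.cast_natCast, h4] at h5
  norm_num at h5

lemma norm_gauss (a : ℕ) [NeZero a] (ha : Odd a) (hsq : Squarefree a) :
    ‖gaussSum (jchar a) ZMod.stdAddChar‖ = Real.sqrt a := by
  have hprim := jchar_primitive a ha hsq
  set τ := gaussSum (jchar a) ZMod.stdAddChar with hτ
  have h1 : ZMod.dft (⇑(jchar a)) = (jchar a (-1) * τ) • (⇑(jchar a)) := by
    ext k
    rw [hprim.fourierTransform_eq_inv_mul_gaussSum, jchar_inv, ← hτ, Pi.smul_apply, smul_eq_mul,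
      ← neg_one_mul k, map_mul]
    ring
  have h2 := congrFun (ZMod.dft_dft (⇑(jchar a))) 1
  rw [h1, map_smul, h1] at h2
  simp only [Pi.smul_apply, smul_eq_mul, map_one, mul_one] at h2
  have h3 : jchar a (-1) * jchar a (-1) = 1 := by
    rw [← map_mul]; simp
  have h4 : ‖jchar a (-1)‖ = 1 := by
    have := congrArg norm h3
    rw [norm_mul, norm_one] at this
    nlinarith [norm_nonneg (jchar a (-1))]
  have h5 := congrArg norm h2
  simp only [norm_mul, h4, one_mul, mul_one, Complex.norm_natCast] at h5
  rw [← h5, Real.sqrt_mul_self (norm_nonneg _)]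

lemma norm_stdAddChar_sub (a k : ℕ) [NeZero a] (hk : 0 < k) (hka : k < a) :
    ‖(ZMod.stdAddChar (k : ZMod a) : ℂ) - 1‖⁻¹ ≤ a / 4 * ((k : ℝ)⁻¹ + ((a - k : ℕ) : ℝ)⁻¹) := by
  have h := ZMod.stdAddChar_coe (N := a) (k : ℤ)
  simp only [Int.cast_natCast] at h
  have ha0 : (0 : ℝ) < a := by exact_mod_cast (hk.trans hka)
  have hk0 : (0 : ℝ) < k := by exact_mod_cast hk
  have hka' : (k : ℝ) < a := by exact_mod_cast hka
  have h2 : (2 * (Real.pi : ℂ) * I * (k : ℂ) / (a : ℂ)) = I * ((2 * Real.pi * k / a : ℝ) : ℂ) := by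
    push_cast; ring
  rw [h, h2, Complex.norm_exp_I_mul_ofReal_sub_one]
  have h3 : 2 * Real.pi * k / a / 2 = Real.pi * (k / a) := by ring
  rw [h3]
  have hpi := Real.pi_pos
  rw [Nat.cast_sub hka.le]
  rcases le_or_gt ((k : ℝ) / a) (1 / 2) with hle | hgt
  · have := Real.mul_le_sin (x := Real.pi * (k / a)) (by positivity) (by nlinarith)
    have e : 2 / Real.pi * (Real.pi * (k / a)) = 2 * k / a := by field_simp
    rw [e] at this
    have hpos : 0 < 2 * (k : ℝ) / a := by positivity
    rw [Real.norm_of_nonneg (by linarith)]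
    calc (2 * Real.sin (Real.pi * (k / a)))⁻¹ ≤ (2 * (2 * (k : ℝ) / a))⁻¹ := by
          apply inv_anti₀ (by positivity); linarith
      _ = a / 4 * (k : ℝ)⁻¹ := by field_simp; ring
      _ ≤ _ := by
        apply mul_le_mul_of_nonneg_left _ (by positivity)
        have : 0 < ((a : ℝ) - k)⁻¹ := inv_pos.2 (by linarith)
        linarith
  · have hs : Real.sin (Real.pi * (k / a)) = Real.sin (Real.pi * ((a - k) / a)) := by
      rw [← Real.sin_pi_sub]; congr 1; field_simp
    have hle : ((a : ℝ) - k) / a ≤ 1 / 2 := by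
      rw [sub_div, div_self ha0.ne']; linarith
    have hak : 0 < (a : ℝ) - k := by linarith
    have := Real.mul_le_sin (x := Real.pi * ((a - k) / a)) (by positivity) (by nlinarith)
    have e : 2 / Real.pi * (Real.pi * ((a - k) / a)) = 2 * ((a : ℝ) - k) / a := by field_simp
    rw [e] at this
    have hpos : 0 < 2 * ((a : ℝ) - k) / a := by positivity
    rw [hs, Real.norm_of_nonneg (by linarith)]
    calc (2 * Real.sin (Real.pi * ((a - k) / a)))⁻¹ ≤ (2 * (2 * ((a : ℝ) - k) / a))⁻¹ := by
          apply inv_anti₀ (by positivity); linarith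
      _ = a / 4 * ((a : ℝ) - k)⁻¹ := by field_simp; ring
      _ ≤ _ := by
        apply mul_le_mul_of_nonneg_left _ (by positivity)
        have : 0 < (k : ℝ)⁻¹ := by positivity
        linarith

lemma sum_inv_stdAddChar (a : ℕ) [NeZero a] :
    ∑ h ∈ Finset.univ.erase (0 : ZMod a), ‖(ZMod.stdAddChar h : ℂ) - 1‖⁻¹
      ≤ a / 2 * (1 + Real.log a) := by
  have e1 : ∑ h ∈ Finset.univ.erase (0 : ZMod a), ‖(ZMod.stdAddChar h : ℂ) - 1‖⁻¹
      = ∑ k ∈ Finset.Ico 1 a, ‖(ZMod.stdAddChar (k : ZMod a) : ℂ) - 1‖⁻¹ := by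
    apply Finset.sum_bij (fun (h : ZMod a) _ => h.val)
    · intro h hh
      simp only [Finset.mem_erase, Finset.mem_univ, and_true] at hh
      rw [Finset.mem_Ico]
      refine ⟨?_, ZMod.val_lt h⟩
      have := (ZMod.val_ne_zero h).2 hh
      omega
    · intro x _ y _ hxy
      exact ZMod.val_injective a hxy
    · intro k hk
      rw [Finset.mem_Ico] at hk
      refine ⟨(k : ZMod a), ?_, ZMod.val_cast_of_lt hk.2⟩
      simp only [Finset.mem_erase, Finset.mem_univ, and_true]
      intro h0
      have := congrArg ZMod.val h0
      rw [ZMod.val_cast_of_lt hk.2] at this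
      simp at this; omega
    · intro h _
      simp
  rw [e1]
  have e2 : ∑ k ∈ Finset.Ico 1 a, ‖(ZMod.stdAddChar (k : ZMod a) : ℂ) - 1‖⁻¹
      ≤ ∑ k ∈ Finset.Ico 1 a, (a : ℝ) / 4 * ((k : ℝ)⁻¹ + ((a - k : ℕ) : ℝ)⁻¹) := by
    apply Finset.sum_le_sum
    intro k hk
    rw [Finset.mem_Ico] at hk
    exact norm_stdAddChar_sub a k hk.1 hk.2
  refine e2.trans ?_
  rw [← Finset.mul_sum, Finset.sum_add_distrib]
  have e3 : ∑ k ∈ Finset.Ico 1 a, ((a - k : ℕ) : ℝ)⁻¹ = ∑ k ∈ Finset.Ico 1 a, ((k : ℕ) : ℝ)⁻¹ := by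
    apply Finset.sum_bij (fun k _ => a - k)
    · intro k hk; rw [Finset.mem_Ico] at *; omega
    · intro k hk l hl h; rw [Finset.mem_Ico] at *; omega
    · intro k hk; rw [Finset.mem_Ico] at hk; exact ⟨a - k, by rw [Finset.mem_Ico]; omega, by omega⟩
    · intro k hk; rfl
  rw [e3]
  have e4 : ∑ k ∈ Finset.Ico 1 a, ((k : ℕ) : ℝ)⁻¹ ≤ 1 + Real.log a := by
    have := harmonic_le_one_add_log a
    rw [harmonic_eq_sum_Icc] at this
    push_cast at this
    refine le_trans ?_ this
    apply Finset.sum_le_sum_of_subset_of_nonneg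
    · intro k hk; simp only [Finset.mem_Ico, Finset.mem_Icc] at *; omega
    · intros; positivity
  have ha : (0 : ℝ) ≤ a := by positivity
  nlinarith

lemma pv_sqfree (a : ℕ) (ha : Odd a) (hsq : Squarefree a) (ha1 : a ≠ 1) (b c : ℤ)
    (hc : IsCoprime c (a : ℤ)) (J : ℕ) :
    |∑ j ∈ Finset.range J, (jacobiSym (b + c * j) a : ℝ)| ≤ Real.sqrt a * (1 + Real.log a) := by
  have : NeZero a := ⟨hsq.ne_zero⟩
  have hprim := jchar_primitive a ha hsq
  set τ := gaussSum (jchar a) ZMod.stdAddChar with hτ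
  have hnτ : ‖τ‖ = Real.sqrt a := norm_gauss a ha hsq
  have ha0 : (0 : ℝ) < a := by exact_mod_cast Nat.pos_of_ne_zero hsq.ne_zero
  have key : (∑ j ∈ Finset.range J, ((jacobiSym (b + c * j) a : ℤ) : ℂ)) * τ
      = ∑ h ∈ Finset.univ.erase (0 : ZMod a), jchar a h * (ZMod.stdAddChar ((b : ZMod a) * h) *
          ∑ j ∈ Finset.range J, (ZMod.stdAddChar ((c : ZMod a) * h) : ℂ) ^ j) := by
    have hz : jchar a 0 = 0 := by
      apply MulChar.map_nonunit
      rw [isUnit_zero_iff]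
      intro h
      have : a = 1 := by
        have h2 : ((0 : ℕ) : ZMod a) = ((1 : ℕ) : ZMod a) := by simpa using h
        rw [ZMod.natCast_eq_natCast_iff] at h2
        have := (Nat.modEq_iff_dvd' (by norm_num : 0 ≤ 1)).1 h2
        simpa using this
      exact ha1 this
    rw [Finset.sum_erase _ (by rw [hz, zero_mul]), Finset.sum_mul]
    have : ∀ j ∈ Finset.range J, ((jacobiSym (b + c * j) a : ℤ) : ℂ) * τ
        = ∑ h : ZMod a, jchar a h * (ZMod.stdAddChar ((b : ZMod a) * h) *
          (ZMod.stdAddChar ((c : ZMod a) * h) : ℂ) ^ j) := by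
      intro j _
      rw [← jchar_intCast]
      have := gaussSum_mulShift_of_isPrimitive ZMod.stdAddChar hprim (((b + c * j : ℤ)) : ZMod a)
      rw [jchar_inv, ← hτ] at this
      rw [← this, gaussSum]
      apply Finset.sum_congr rfl
      intro h _
      rw [AddChar.mulShift_apply, ← AddChar.map_nsmul_eq_pow, ← AddChar.map_add_eq_mul]
      congr 2
      push_cast
      rw [nsmul_eq_mul]
      ring
    rw [Finset.sum_congr rfl this, Finset.sum_comm]
    apply Finset.sum_congr rfl
    intro h _
    rw [Finset.mul_sum, Finset.mul_sum]
  have hcu : IsUnit (c : ZMod a) := by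
    obtain ⟨u, v, huv⟩ := hc
    have := congrArg (Int.cast : ℤ → ZMod a) huv
    push_cast at this
    simp only [CharP.cast_eq_zero, mul_zero, add_zero] at this
    exact IsUnit.of_mul_eq_one _ (by rw [mul_comm]; exact this)
  have hbound : ‖(∑ j ∈ Finset.range J, ((jacobiSym (b + c * j) a : ℤ) : ℂ)) * τ‖
      ≤ ∑ h ∈ Finset.univ.erase (0 : ZMod a), 2 * ‖(ZMod.stdAddChar ((c : ZMod a) * h) : ℂ) - 1‖⁻¹ := by
    rw [key]
    refine (norm_sum_le _ _).trans (Finset.sum_le_sum ?_)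
    intro h hh
    simp only [Finset.mem_erase, Finset.mem_univ, and_true] at hh
    rw [norm_mul, norm_mul]
    have n1 : ‖jchar a h‖ ≤ 1 := DirichletCharacter.norm_le_one _ _
    have n2 : ∀ x : ZMod a, ‖(ZMod.stdAddChar x : ℂ)‖ = 1 := fun x => by
      rw [ZMod.stdAddChar_apply]; exact Circle.norm_coe _
    rw [n2, one_mul]
    have hne : (ZMod.stdAddChar ((c : ZMod a) * h) : ℂ) ≠ 1 := by
      intro h1
      have := ZMod.injective_stdAddChar (N := a) (a₁ := (c : ZMod a) * h) (a₂ := 0) (by simpa using h1)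
      exact hh ((IsUnit.mul_right_eq_zero hcu).1 this)
    rw [geom_sum_eq hne, norm_div, div_eq_mul_inv]
    have n3 : ‖(ZMod.stdAddChar ((c : ZMod a) * h) : ℂ) ^ J - 1‖ ≤ 2 := by
      refine (norm_sub_le _ _).trans ?_
      rw [norm_pow, n2]; norm_num
    calc _ ≤ 1 * (2 * ‖(ZMod.stdAddChar ((c : ZMod a) * h) : ℂ) - 1‖⁻¹) := by gcongr
      _ = _ := one_mul _
  have hre : ∑ h ∈ Finset.univ.erase (0 : ZMod a), 2 * ‖(ZMod.stdAddChar ((c : ZMod a) * h) : ℂ) - 1‖⁻¹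
      = ∑ h ∈ Finset.univ.erase (0 : ZMod a), 2 * ‖(ZMod.stdAddChar h : ℂ) - 1‖⁻¹ := by
    obtain ⟨u, hu⟩ := hcu
    rw [← hu]
    apply Finset.sum_bij (fun h _ => (u : ZMod a) * h)
    · intro h hh
      simp only [Finset.mem_erase, Finset.mem_univ, and_true] at *
      intro h0; exact hh ((Units.mul_right_eq_zero u).1 h0)
    · intro x _ y _ hxy
      exact (Units.mul_right_inj u).1 hxy
    · intro y hy
      simp only [Finset.mem_erase, Finset.mem_univ, and_true] at *
      refine ⟨(u⁻¹ : (ZMod a)ˣ) * y, ?_, by simp⟩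
      intro h0; exact hy ((Units.mul_right_eq_zero _).1 h0)
    · intro x _; rfl
  rw [hre, ← Finset.mul_sum, norm_mul, hnτ] at hbound
  have h3 := sum_inv_stdAddChar a
  have h4 : ‖∑ j ∈ Finset.range J, ((jacobiSym (b + c * j) a : ℤ) : ℂ)‖
      = |∑ j ∈ Finset.range J, (jacobiSym (b + c * j) a : ℝ)| := by
    rw [← Real.norm_eq_abs, ← Complex.norm_real]; push_cast; rfl
  rw [h4] at hbound
  have hs : 0 < Real.sqrt a := Real.sqrt_pos.2 ha0
  have hss := Real.mul_self_sqrt ha0.le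
  refine le_of_mul_le_mul_right ?_ hs
  calc _ ≤ _ := hbound
    _ ≤ a * (1 + Real.log a) := by linarith
    _ = _ := by rw [mul_assoc, mul_comm (1 + _), ← mul_assoc, hss]

lemma jac_mul_sq (x : ℤ) (n p : ℕ) (hn : n ≠ 0) (hp : p.Prime) :
    jacobiSym x (n * p ^ 2) = if (p : ℤ) ∣ x then 0 else jacobiSym x n := by
  have : NeZero p := ⟨hp.ne_zero⟩
  rw [jacobiSym.mul_right' _ hn (pow_ne_zero _ hp.ne_zero), jacobiSym.pow_right]
  split_ifs with h
  · have : jacobiSym x p = 0 := by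
      rw [jacobiSym.eq_zero_iff_not_coprime]
      intro h1
      have h2 : (p : ℤ) ∣ (x.gcd p : ℕ) := Int.dvd_coe_gcd h dvd_rfl
      rw [h1] at h2
      exact hp.one_lt.ne' (by exact_mod_cast Int.eq_one_of_dvd_one (by positivity) h2)
    simp [this]
  · have : x.gcd p = 1 := by
      rw [Int.gcd_comm]
      exact (Int.isCoprime_iff_gcd_eq_one.1 ((Nat.prime_iff_prime_int.1 hp).coprime_iff_not_dvd.2 h))
    rw [jacobiSym.sq_one this, mul_one]

lemma pv_step (n p : ℕ) (hn : n ≠ 0) (hp : p.Prime) (B : ℝ)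
    (h : ∀ b c : ℤ, IsCoprime c (n : ℤ) → ∀ J : ℕ,
      |∑ j ∈ Finset.range J, (jacobiSym (b + c * j) n : ℝ)| ≤ B)
    (b c : ℤ) (hc : IsCoprime c ((n * p ^ 2 : ℕ) : ℤ)) (J : ℕ) :
    |∑ j ∈ Finset.range J, (jacobiSym (b + c * j) (n * p ^ 2) : ℝ)| ≤ 2 * B := by
  have hB : 0 ≤ B := (abs_nonneg _).trans (h 0 1 isCoprime_one_left 0)
  push_cast at hc
  have hcn : IsCoprime c (n : ℤ) := hc.of_mul_right_left
  have hcp : IsCoprime c (p : ℤ) := (IsCoprime.pow_right_iff (by norm_num)).1 hc.of_mul_right_right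
  by_cases hpn : p ∣ n
  · have : ∀ j ∈ Finset.range J, (jacobiSym (b + c * j) (n * p ^ 2) : ℝ) = jacobiSym (b + c * j) n := by
      intro j _
      rw [jac_mul_sq _ _ _ hn hp]
      split_ifs with hd
      · have : NeZero n := ⟨hn⟩
        have : jacobiSym (b + c * j) n = 0 := by
          rw [jacobiSym.eq_zero_iff_not_coprime]
          intro h1
          have h2 : (p : ℤ) ∣ ((b + c * j).gcd n : ℕ) := Int.dvd_coe_gcd hd (by exact_mod_cast hpn)
          rw [h1] at h2
          exact hp.one_lt.ne' (by exact_mod_cast Int.eq_one_of_dvd_one (by positivity) h2)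
        rw [this]
      · rfl
    rw [Finset.sum_congr rfl this]
    linarith [h b c hcn J]
  · have hsplit : ∑ j ∈ Finset.range J, (jacobiSym (b + c * j) (n * p ^ 2) : ℝ)
        = ∑ j ∈ Finset.range J, (jacobiSym (b + c * j) n : ℝ)
          - ∑ j ∈ (Finset.range J).filter (fun j => (p : ℤ) ∣ b + c * (j : ℕ)), (jacobiSym (b + c * j) n : ℝ) := by
      rw [Finset.sum_filter, ← Finset.sum_sub_distrib]
      apply Finset.sum_congr rfl
      intro j _
      rw [jac_mul_sq _ _ _ hn hp]
      split_ifs <;> simp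
    have hj0 : ∃ j0 : ℕ, j0 < p ∧ (p : ℤ) ∣ b + c * j0 := by
      obtain ⟨u, v, huv⟩ := hcp
      have hp0 : (0 : ℤ) < p := by exact_mod_cast hp.pos
      refine ⟨((-b * u) % p).toNat, ?_, ?_⟩
      · have := Int.emod_lt_of_pos (-b * u) hp0
        omega
      · rw [Int.toNat_of_nonneg (Int.emod_nonneg _ hp0.ne')]
        have h1 := Int.emod_add_mul_ediv (-b * u) p
        refine ⟨b * v - c * ((-b * u) / p), ?_⟩
        linear_combination c * h1 - b * huv
    obtain ⟨j0, hj0p, hj0d⟩ := hj0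
    have hfil : ∑ j ∈ (Finset.range J).filter (fun j => (p : ℤ) ∣ b + c * (j : ℕ)), (jacobiSym (b + c * j) n : ℝ)
        = ∑ i ∈ Finset.range ((J + (p - 1) - j0) / p), (jacobiSym ((b + c * j0) + (c * p) * i) n : ℝ) := by
      have hiff : ∀ i, i < (J + (p - 1) - j0) / p ↔ j0 + p * i < J := by
        intro i
        rw [← Nat.succ_le_iff, Nat.le_div_iff_mul_le hp.pos, Nat.succ_mul, mul_comm i p]
        have := hp.pos
        omega
      symm
      apply Finset.sum_bij (fun i _ => j0 + p * i)
      · intro i hi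
        rw [Finset.mem_range, hiff] at hi
        rw [Finset.mem_filter, Finset.mem_range]
        refine ⟨hi, ?_⟩
        push_cast
        have : b + c * ((j0 : ℤ) + p * i) = (b + c * j0) + p * (c * i) := by ring
        rw [this]
        exact dvd_add hj0d (dvd_mul_right _ _)
      · intro i _ i' _ hii
        have : p * i = p * i' := by simpa using hii
        exact Nat.eq_of_mul_eq_mul_left hp.pos this
      · intro j hj
        rw [Finset.mem_filter, Finset.mem_range] at hj
        have hd : (p : ℤ) ∣ (j : ℤ) - j0 := by
          have h1 : (p : ℤ) ∣ c * ((j : ℤ) - j0) := by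
            have := dvd_sub hj.2 hj0d
            have e : b + c * (j : ℤ) - (b + c * j0) = c * ((j : ℤ) - j0) := by ring
            rwa [e] at this
          exact hcp.symm.dvd_of_dvd_mul_left h1
        have hmod : j % p = j0 := by
          have h1 : (j0 : ℤ) ≡ j [ZMOD p] := (Int.modEq_iff_dvd).2 hd
          have h2 : j0 ≡ j [MOD p] := by exact_mod_cast h1
          rw [← Nat.mod_eq_of_lt hj0p]; exact h2.symm
        have hj' : j0 + p * (j / p) = j := by rw [← hmod]; exact Nat.mod_add_div j p
        refine ⟨j / p, ?_, hj'⟩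
        rw [Finset.mem_range, hiff, hj']
        exact hj.1
      · intro i _
        push_cast
        ring_nf
    rw [hsplit, hfil]
    have hnp : IsCoprime (p : ℤ) (n : ℤ) := by
      rw [Nat.isCoprime_iff_coprime]
      exact (Nat.Prime.coprime_iff_not_dvd hp).2 hpn
    have t1 := h b c hcn J
    have t2 := h (b + c * j0) (c * p) (hcn.mul_left hnp) ((J + (p - 1) - j0) / p)
    refine (abs_sub _ _).trans ?_
    linarith

lemma pv (ε : ℝ) (hε : 0 < ε) : ∃ K : ℝ, 0 < K ∧ ∀ n : ℕ, Odd n → ¬ IsSquare n → ∀ b c : ℤ,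
    IsCoprime c (n : ℤ) → ∀ J : ℕ,
    |∑ j ∈ Finset.range J, (jacobiSym (b + c * j) n : ℝ)| ≤ K * (n : ℝ) ^ (1 / 2 + ε) := by
  refine ⟨1 + 1 / ε, by positivity, ?_⟩
  intro n hn hns b c hc J
  obtain ⟨a, k, rfl, hsq⟩ := Nat.sq_mul_squarefree n
  have ha : Odd a := (Nat.odd_mul.1 hn).2
  have hk : Odd k := (Nat.odd_pow_iff (by norm_num : 2 ≠ 0)).1 (Nat.odd_mul.1 hn).1
  have ha1 : a ≠ 1 := by
    rintro rfl
    exact hns ⟨k, by ring⟩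
  have key : ∀ k : ℕ, k ≠ 0 → ∀ b c : ℤ, IsCoprime c ((a * k ^ 2 : ℕ) : ℤ) → ∀ J : ℕ,
      |∑ j ∈ Finset.range J, (jacobiSym (b + c * j) (a * k ^ 2) : ℝ)|
        ≤ Real.sqrt a * (1 + Real.log a) * k := by
    intro k
    induction k using induction_on_primes with
    | zero => intro h; exact absurd rfl h
    | one =>
      intro _ b c hc J
      simp only [one_pow, mul_one, Nat.cast_one] at hc ⊢
      exact pv_sqfree a ha hsq ha1 b c hc J
    | prime_mul p m hp ih =>
      intro hm b c hc J
      have hm0 : m ≠ 0 := by rintro rfl; simp at hm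
      have e : a * (p * m) ^ 2 = (a * m ^ 2) * p ^ 2 := by ring
      rw [e] at hc ⊢
      have := pv_step (a * m ^ 2) p (mul_ne_zero hsq.ne_zero (pow_ne_zero _ hm0)) hp _ (ih hm0) b c hc J
      refine this.trans ?_
      push_cast
      have hp2 : (2 : ℝ) ≤ p := by exact_mod_cast hp.two_le
      have hlog : 0 ≤ Real.log a := Real.log_natCast_nonneg a
      have : 0 ≤ Real.sqrt a * (1 + Real.log a) * m := by positivity
      nlinarith
  have hk0 : k ≠ 0 := by rintro rfl; simp at hk
  have h1 := key k hk0 b c (by rw [mul_comm]; exact hc) J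
  rw [mul_comm (k ^ 2) a]
  refine h1.trans ?_
  have ha0 : (1 : ℝ) ≤ a := by exact_mod_cast Nat.one_le_iff_ne_zero.2 hsq.ne_zero
  have hk1 : (1 : ℝ) ≤ k := by exact_mod_cast Nat.one_le_iff_ne_zero.2 hk0
  have hlog : Real.log a ≤ (a : ℝ) ^ ε / ε := Real.log_le_rpow_div (by linarith) hε
  have h1a : 1 ≤ (a : ℝ) ^ ε := Real.one_le_rpow ha0 hε.le
  have h1k : 1 ≤ ((k : ℝ) ^ 2) ^ ε := Real.one_le_rpow (by nlinarith) hε.le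
  have e : (((a * k ^ 2 : ℕ) : ℝ)) ^ (1 / 2 + ε) = Real.sqrt a * k * ((a : ℝ) ^ ε * ((k : ℝ) ^ 2) ^ ε) := by
    have hpos : (0 : ℝ) < ((a * k ^ 2 : ℕ) : ℝ) := by
      push_cast; nlinarith [mul_pos (by linarith : (0:ℝ) < a) (by positivity : (0:ℝ) < (k:ℝ) ^ 2)]
    rw [Real.rpow_add hpos]
    push_cast
    rw [Real.mul_rpow (by positivity) (by positivity), Real.mul_rpow (by positivity) (by positivity),
      ← Real.sqrt_eq_rpow, ← Real.sqrt_eq_rpow, Real.sqrt_sq (by positivity)]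
  rw [e]
  have h2 : 1 + Real.log a ≤ (1 + 1 / ε) * (a : ℝ) ^ ε := by
    rw [add_mul, one_mul, one_div, inv_mul_eq_div]; linarith
  calc _ = Real.sqrt a * k * (1 + Real.log a) := by ring
    _ ≤ Real.sqrt a * k * ((1 + 1 / ε) * (a : ℝ) ^ ε) := by gcongr
    _ ≤ Real.sqrt a * k * ((1 + 1 / ε) * (a : ℝ) ^ ε) * ((k : ℝ) ^ 2) ^ ε := by
        apply le_mul_of_one_le_right (by positivity) h1k
    _ = _ := by ring

lemma cpow_diff_bound (m : ℕ) (hm : 0 < m) (w : ℂ) (σ : ℝ) (hσ : 0 < σ) (hw : σ ≤ w.re) :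
    ‖(m : ℂ) ^ (-w) - ((m + 1 : ℕ) : ℂ) ^ (-w)‖ ≤
      ‖w‖ / σ * ((m : ℝ) ^ (-σ) - ((m + 1 : ℕ) : ℝ) ^ (-σ)) := by
  have hm0 : (0 : ℝ) < m := by exact_mod_cast hm
  have hm1 : (1 : ℝ) ≤ m := by exact_mod_cast hm
  have hw0 : -w ≠ 0 := by
    intro h
    have := congrArg Complex.re h
    simp at this; linarith
  have := image_norm_le_of_norm_deriv_right_le_deriv_boundary'
    (f := fun t : ℝ => (m : ℂ) ^ (-w) - (t : ℂ) ^ (-w))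
    (f' := fun t : ℝ => - ((-w) * (t : ℂ) ^ (-w - 1)))
    (B := fun t : ℝ => ‖w‖ / σ * ((m : ℝ) ^ (-σ) - t ^ (-σ)))
    (B' := fun t : ℝ => ‖w‖ / σ * (0 - (-σ) * t ^ (-σ - 1)))
    (a := (m : ℝ)) (b := ((m + 1 : ℕ) : ℝ)) ?_ ?_ ?_ ?_ ?_ ?_ (x := ((m + 1 : ℕ) : ℝ)) ?_
  · simpa using this
  · apply ContinuousOn.sub continuousOn_const
    intro t ht
    have ht0 : 0 < t := lt_of_lt_of_le hm0 ht.1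
    exact (hasDerivAt_ofReal_cpow_const ht0.ne' hw0).continuousAt.continuousWithinAt
  · intro t ht
    have ht0 : 0 < t := lt_of_lt_of_le hm0 ht.1
    have h2 := (hasDerivAt_ofReal_cpow_const ht0.ne' hw0)
    exact (h2.const_sub _).hasDerivWithinAt
  · simp
  · intro t ht
    have ht0 : 0 < t := lt_of_lt_of_le hm0 ht.1
    exact (((Real.hasDerivAt_rpow_const (p := -σ) (Or.inl ht0.ne')).const_sub ((m : ℝ) ^ (-σ))).const_mul
      (‖w‖ / σ)).continuousAt.continuousWithinAt
  · intro t ht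
    have ht0 : 0 < t := lt_of_lt_of_le hm0 ht.1
    rw [zero_sub]
    exact (((Real.hasDerivAt_rpow_const (p := -σ) (Or.inl ht0.ne')).const_sub ((m : ℝ) ^ (-σ))).const_mul
      (‖w‖ / σ)).hasDerivWithinAt
  · intro t ht
    have ht0 : 0 < t := lt_of_lt_of_le hm0 ht.1
    rw [norm_neg, norm_mul, norm_neg, Complex.norm_cpow_eq_rpow_re_of_pos ht0]
    have e : ‖w‖ / σ * (0 - (-σ) * t ^ (-σ - 1)) = ‖w‖ * t ^ (-σ - 1) := by field_simp; ring
    rw [e]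
    apply mul_le_mul_of_nonneg_left _ (norm_nonneg _)
    apply Real.rpow_le_rpow_of_exponent_le (hm1.trans ht.1)
    simp; linarith
  · constructor
    · push_cast; linarith
    · rfl


lemma abel_id (f : ℕ → ℂ) (g : ℕ → ℂ) (h0 : f 0 = 0) (T : ℕ) :
    ∑ i ∈ Finset.range T, f (i + 1) * g (i + 1) =
      ∑ i ∈ Finset.range T, (∑ m ∈ Finset.range (i + 2), f m) * (g (i + 1) - g (i + 2))
        + (∑ m ∈ Finset.range (T + 1), f m) * g (T + 1) := by
  induction T with
  | zero => simp [h0]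
  | succ T ih =>
    have e1 := Finset.sum_range_succ (fun i => f (i + 1) * g (i + 1)) T
    have e2 := Finset.sum_range_succ (fun i => (∑ m ∈ Finset.range (i + 2), f m) * (g (i + 1) - g (i + 2))) T
    have e3 := Finset.sum_range_succ f (T + 1)
    rw [e1, ih, e2, show T + 1 + 1 = T + 2 from rfl, e3]
    ring

lemma LFunction_tail (N : ℕ) [NeZero N] (χ : DirichletCharacter ℂ N) (hχ : χ ≠ 1)
    (h0 : χ 0 = 0) (B : ℝ)
    (hB : ∀ T : ℕ, ‖∑ m ∈ Finset.range T, χ (m : ZMod N)‖ ≤ B) (w : ℂ) (hw : 0 < w.re) (M : ℕ) :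
    ‖χ.LFunction w - ∑ i ∈ Finset.range M, χ ((i + 1 : ℕ) : ZMod N) * ((i + 1 : ℕ) : ℂ) ^ (-w)‖
      ≤ 2 * B * (‖w‖ / w.re) * ((M + 1 : ℕ) : ℝ) ^ (-w.re) := by
  have hB0 : 0 ≤ B := (norm_nonneg _).trans (hB 0)
  set S : ℕ → ℂ := fun T => ∑ m ∈ Finset.range T, χ (m : ZMod N) with hS
  set t : ℕ → ℂ → ℂ := fun i z => S (i + 2) * (((i + 1 : ℕ) : ℂ) ^ (-z) - ((i + 2 : ℕ) : ℂ) ^ (-z)) with ht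
  set v : ℝ → ℕ → ℝ := fun σ i => ((i + 1 : ℕ) : ℝ) ^ (-σ) - ((i + 2 : ℕ) : ℝ) ^ (-σ) with hv
  have hvlim : ∀ σ : ℝ, 0 < σ → Tendsto (fun T : ℕ => ((T + 1 : ℕ) : ℝ) ^ (-σ)) atTop (𝓝 0) := by
    intro σ hσ
    exact (tendsto_rpow_neg_atTop hσ).comp (tendsto_natCast_atTop_atTop.comp (tendsto_add_atTop_nat 1))
  have hv0 : ∀ σ : ℝ, 0 < σ → ∀ i, 0 ≤ v σ i := by
    intro σ hσ i
    rw [hv, sub_nonneg]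
    apply Real.rpow_le_rpow_of_nonpos (by positivity) (by push_cast; linarith) (by linarith)
  have hvsum : ∀ σ : ℝ, ∀ a b : ℕ, a ≤ b → ∑ i ∈ Finset.Ico a b, v σ i =
      ((a + 1 : ℕ) : ℝ) ^ (-σ) - ((b + 1 : ℕ) : ℝ) ^ (-σ) := by
    intro σ a b hab
    induction b, hab using Nat.le_induction with
    | base => simp
    | succ b hb ih =>
      rw [Finset.sum_Ico_succ_top hb, ih, hv]
      ring
  have hvsummable : ∀ σ : ℝ, 0 < σ → Summable (v σ) := by
    intro σ hσ
    apply summable_of_sum_range_le (c := 1) (hv0 σ hσ)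
    intro n
    rw [Finset.range_eq_Ico, hvsum σ 0 n (Nat.zero_le _)]
    have : 0 ≤ ((n + 1 : ℕ) : ℝ) ^ (-σ) := by positivity
    simp only [zero_add, Nat.cast_one, Real.one_rpow]
    linarith
  have htb : ∀ (σ : ℝ) (z : ℂ) (i : ℕ), 0 < σ → σ ≤ z.re → ‖t i z‖ ≤ B * (‖z‖ / σ * v σ i) := by
    intro σ z i hσ hz
    rw [ht, norm_mul]
    apply mul_le_mul (hB _) (cpow_diff_bound (i + 1) (by omega) z σ hσ hz) (norm_nonneg _) hB0
  have hsum : ∀ z : ℂ, 0 < z.re → Summable (fun i => t i z) := by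
    intro z hz
    apply Summable.of_norm_bounded (g := fun i => B * (‖z‖ / z.re * v z.re i))
    · exact ((hvsummable _ hz).mul_left _).mul_left _
    · intro i; exact htb _ _ _ hz le_rfl
  set G : ℂ → ℂ := fun z => ∑' i, t i z with hG
  have hST : ∀ z : ℂ, 0 < z.re → Tendsto (fun T : ℕ => S (T + 1) * ((T + 1 : ℕ) : ℂ) ^ (-z)) atTop (𝓝 0) := by
    intro z hz
    apply squeeze_zero_norm (a := fun T : ℕ => B * ((T + 1 : ℕ) : ℝ) ^ (-z.re))
    · intro T
      rw [norm_mul, Complex.norm_natCast_cpow_of_pos (by omega)]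
      apply mul_le_mul_of_nonneg_right (hB _) (by positivity)
    · simpa using (hvlim z.re hz).const_mul B
  have hpart : ∀ z : ℂ, 0 < z.re → Tendsto (fun T : ℕ => ∑ i ∈ Finset.range T,
      χ ((i + 1 : ℕ) : ZMod N) * ((i + 1 : ℕ) : ℂ) ^ (-z)) atTop (𝓝 (G z)) := by
    intro z hz
    have h1 := ((hsum z hz).hasSum.tendsto_sum_nat).add (hST z hz)
    rw [add_zero] at h1
    refine h1.congr ?_
    intro T
    have := abel_id (fun m => χ (m : ZMod N)) (fun m => (m : ℂ) ^ (-z)) (by simpa using h0) T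
    exact this.symm
  have hone : ∀ z : ℂ, 1 < z.re → χ.LFunction z = G z := by
    intro z hz
    rw [DirichletCharacter.LFunction_eq_LSeries χ hz]
    have h1 := (DirichletCharacter.LSeriesSummable_of_one_lt_re χ hz).hasSum.tendsto_sum_nat
    have h2 := h1.comp (tendsto_add_atTop_nat 1)
    refine tendsto_nhds_unique h2 ((hpart z (by linarith)).congr ?_)
    intro T
    rw [Function.comp, Finset.sum_range_succ']
    rw [LSeries.term_zero, add_zero]
    apply Finset.sum_congr rfl
    intro i _
    rw [LSeries.term_of_ne_zero (by omega), Complex.cpow_neg, div_eq_mul_inv]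
  have hall : χ.LFunction w = G w := by
    set σ0 := min (w.re / 2) 1 with hσ0
    have hσ0p : 0 < σ0 := lt_min (by linarith) one_pos
    set R := ‖w‖ + 3 with hR
    set U : Set ℂ := {z | σ0 < z.re} ∩ Metric.ball 0 R with hU
    have hUo : IsOpen U := (isOpen_lt continuous_const Complex.continuous_re).inter Metric.isOpen_ball
    have hUc : IsPreconnected U :=
      ((convex_halfSpace_re_gt σ0).inter (convex_ball 0 R)).isPreconnected
    have hGd : DifferentiableOn ℂ G U := by
      apply Complex.differentiableOn_tsum_of_summable_norm (u := fun i => B * (R / σ0 * v σ0 i))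
      · exact ((hvsummable _ hσ0p).mul_left _).mul_left _
      · intro i z hz
        apply DifferentiableAt.differentiableWithinAt
        have c1 : ((i + 1 : ℕ) : ℂ) ≠ 0 := by exact_mod_cast Nat.succ_ne_zero i
        have c2 : ((i + 2 : ℕ) : ℂ) ≠ 0 := by exact_mod_cast Nat.succ_ne_zero (i + 1)
        have d1 : DifferentiableAt ℂ (fun z : ℂ => ((i + 1 : ℕ) : ℂ) ^ (-z)) z :=
          differentiableAt_id.neg.const_cpow (Or.inl c1)
        have d2 : DifferentiableAt ℂ (fun z : ℂ => ((i + 2 : ℕ) : ℂ) ^ (-z)) z :=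
          differentiableAt_id.neg.const_cpow (Or.inl c2)
        exact (d1.sub d2).const_mul _
      · exact hUo
      · intro i z hz
        refine (htb σ0 z i hσ0p hz.1.le).trans ?_
        have : ‖z‖ ≤ R := by
          have := hz.2
          rw [Metric.mem_ball, dist_zero_right] at this
          exact this.le
        have := hv0 σ0 hσ0p i
        gcongr
    have hLd : DifferentiableOn ℂ χ.LFunction U :=
      (DirichletCharacter.differentiable_LFunction hχ).differentiableOn
    have h2U : (2 : ℂ) ∈ U := by
      refine ⟨?_, ?_⟩
      · have : σ0 ≤ 1 := min_le_right _ _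
        simp only [Set.mem_ofPred_eq, Complex.re_ofNat]; linarith
      · rw [Metric.mem_ball, dist_zero_right]
        have := norm_nonneg w
        simp only [Complex.norm_ofNat]; linarith
    have hwU : w ∈ U := by
      refine ⟨?_, ?_⟩
      · have : σ0 ≤ w.re / 2 := min_le_left _ _
        simp only [Set.mem_ofPred_eq]; linarith
      · rw [Metric.mem_ball, dist_zero_right]
        linarith
    refine (hLd.analyticOnNhd hUo).eqOn_of_preconnected_of_eventuallyEq (hGd.analyticOnNhd hUo) hUc h2U ?_ hwU
    have : {z : ℂ | 1 < z.re} ∈ 𝓝 (2 : ℂ) := by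
      apply (isOpen_lt continuous_const Complex.continuous_re).mem_nhds
      simp
    filter_upwards [this] with z hz using hone z hz
  rw [hall]
  have h1 := ((hpart w hw).sub_const (∑ i ∈ Finset.range M, χ ((i + 1 : ℕ) : ZMod N) * ((i + 1 : ℕ) : ℂ) ^ (-w))).norm
  have h2 : Tendsto (fun T : ℕ => 2 * B * (‖w‖ / w.re) * ((M + 1 : ℕ) : ℝ) ^ (-w.re) + B * ((T + 1 : ℕ) : ℝ) ^ (-w.re)) atTop
      (𝓝 (2 * B * (‖w‖ / w.re) * ((M + 1 : ℕ) : ℝ) ^ (-w.re) + B * 0)) := (((hvlim w.re hw).const_mul B).const_add _)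
  rw [mul_zero, add_zero] at h2
  refine le_of_tendsto_of_tendsto h1 h2 ?_
  filter_upwards [eventually_ge_atTop M] with T hT
  have a1 := abel_id (fun m => χ (m : ZMod N)) (fun m => (m : ℂ) ^ (-w)) (by simpa using h0) T
  have a2 := abel_id (fun m => χ (m : ZMod N)) (fun m => (m : ℂ) ^ (-w)) (by simpa using h0) M
  rw [a1, a2]
  have e : ∀ (X Y x y : ℂ), X + x - (Y + y) = (X - Y) + x - y := by intros; ring
  rw [e, ← Finset.sum_Ico_eq_sub _ hT]
  refine (norm_sub_le _ _).trans ?_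
  have n1 : ∀ T : ℕ, ‖S (T + 1) * ((T + 1 : ℕ) : ℂ) ^ (-w)‖ ≤ B * ((T + 1 : ℕ) : ℝ) ^ (-w.re) := by
    intro T
    rw [norm_mul, Complex.norm_natCast_cpow_of_pos (by omega)]
    apply mul_le_mul_of_nonneg_right (hB _) (by positivity)
  have n2 : ‖∑ i ∈ Finset.Ico M T, t i w‖ ≤ B * (‖w‖ / w.re * ((M + 1 : ℕ) : ℝ) ^ (-w.re)) := by
    refine (norm_sum_le _ _).trans ?_
    refine (Finset.sum_le_sum (fun i _ => htb w.re w i hw le_rfl)).trans ?_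
    rw [← Finset.mul_sum, ← Finset.mul_sum, hvsum _ _ _ hT]
    have : 0 ≤ ((T + 1 : ℕ) : ℝ) ^ (-w.re) := by positivity
    gcongr
    linarith
  have n3 := norm_add_le (∑ i ∈ Finset.Ico M T, t i w) (S (T + 1) * ((T + 1 : ℕ) : ℂ) ^ (-w))
  have n4 : 1 ≤ ‖w‖ / w.re := by
    rw [one_le_div hw]; exact (le_abs_self _).trans (Complex.abs_re_le_norm w)
  have n5 : B * ((M + 1 : ℕ) : ℝ) ^ (-w.re) ≤ B * (‖w‖ / w.re * ((M + 1 : ℕ) : ℝ) ^ (-w.re)) := by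
    apply mul_le_mul_of_nonneg_left _ hB0
    exact le_mul_of_one_le_left (by positivity) n4
  have n6 := n1 T
  have n7 := n1 M
  have goal2 : ‖∑ i ∈ Finset.Ico M T, t i w + S (T + 1) * ((T + 1 : ℕ) : ℂ) ^ (-w)‖ + ‖S (M + 1) * ((M + 1 : ℕ) : ℂ) ^ (-w)‖
      ≤ 2 * B * (‖w‖ / w.re) * ((M + 1 : ℕ) : ℝ) ^ (-w.re) + B * ((T + 1 : ℕ) : ℝ) ^ (-w.re) := by linarith
  exact goal2

lemma sum_rpow_le (β : ℝ) (hβ : 0 < β) (hβ1 : β ≤ 1) (M : ℕ) :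
    ∑ i ∈ Finset.Icc 1 M, ((i : ℕ) : ℝ) ^ (β - 1) ≤ (M : ℝ) ^ β / β := by
  induction M with
  | zero => simp; positivity
  | succ M ih =>
    rw [Finset.sum_Icc_succ_top (by omega)]
    have hM : (0 : ℝ) < ((M + 1 : ℕ) : ℝ) := by positivity
    have h1 := rpow_one_add_le_one_add_mul_self (s := -1 / ((M + 1 : ℕ) : ℝ)) (p := β) (by
      rw [neg_div, neg_le_neg_iff, div_le_one hM]; push_cast; linarith [(Nat.cast_nonneg M : (0 : ℝ) ≤ M)]) hβ.le hβ1
    have e1 : 1 + -1 / ((M + 1 : ℕ) : ℝ) = (M : ℝ) / ((M + 1 : ℕ) : ℝ) := by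
      field_simp; push_cast; ring
    rw [e1, Real.div_rpow (by positivity) hM.le, div_le_iff₀ (by positivity)] at h1
    have e2 : ((M + 1 : ℕ) : ℝ) ^ (β - 1) = ((M + 1 : ℕ) : ℝ) ^ β / ((M + 1 : ℕ) : ℝ) := by
      rw [Real.rpow_sub hM, Real.rpow_one]
    have e3 : (1 + β * (-1 / ((M + 1 : ℕ) : ℝ))) * ((M + 1 : ℕ) : ℝ) ^ β
        = ((M + 1 : ℕ) : ℝ) ^ β - β * (((M + 1 : ℕ) : ℝ) ^ β / ((M + 1 : ℕ) : ℝ)) := by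
      field_simp; ring
    rw [e3, ← e2] at h1
    rw [le_div_iff₀ hβ] at ih ⊢
    nlinarith

lemma sq_pair (m n : ℕ) (hm : 0 < m) (hn : 0 < n) (h : IsSquare (m * n)) :
    ∃ g a b : ℕ, m = g * a ^ 2 ∧ n = g * b ^ 2 := by
  obtain ⟨g, m', n', hg, hcop, rfl, rfl⟩ := Nat.exists_coprime' (m := m) (n := n) (Nat.gcd_pos_of_pos_left _ hm)
  obtain ⟨k, hk⟩ := h
  have hgk : g ∣ k := by
    have : g ^ 2 ∣ k ^ 2 := ⟨m' * n', by rw [sq k, ← hk]; ring⟩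
    exact (Nat.pow_dvd_pow_iff (by norm_num)).1 this
  obtain ⟨l, rfl⟩ := hgk
  have hl : m' * n' = l ^ 2 := by
    have : g ^ 2 * (m' * n') = g ^ 2 * l ^ 2 := by linarith
    exact Nat.eq_of_mul_eq_mul_left (by positivity) this
  obtain ⟨a, ha⟩ := exists_associated_pow_of_mul_eq_pow (Nat.isUnit_iff.2 hcop) hl
  obtain ⟨b, hb⟩ := exists_associated_pow_of_mul_eq_pow (Nat.isUnit_iff.2 (Nat.coprime_comm.1 hcop)) ((mul_comm _ _).trans hl)
  rw [associated_iff_eq] at ha hb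
  exact ⟨g, a, b, by rw [ha]; ring, by rw [hb]; ring⟩

lemma triple_bound (u : ℕ → ℝ) (hu : ∀ n, 0 ≤ u n) (hs : Summable u) (T : Finset (ℕ × ℕ × ℕ)) :
    ∑ q ∈ T, u q.1 * (u q.2.1 * u q.2.2) ≤ (∑' n, u n) * ((∑' n, u n) * (∑' n, u n)) := by
  have hsp : Summable (fun q : ℕ × ℕ => u q.1 * u q.2) :=
    Summable.mul_of_nonneg hs hs hu hu
  have hsf : Summable (fun q : ℕ × ℕ × ℕ => u q.1 * (u q.2.1 * u q.2.2)) :=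
    Summable.mul_of_nonneg (g := fun q : ℕ × ℕ => u q.1 * u q.2) hs hsp hu (fun n => mul_nonneg (hu _) (hu _))
  have h := hsf.sum_le_tsum T (fun q _ => mul_nonneg (hu _) (mul_nonneg (hu _) (hu _)))
  have e1 := hs.tsum_mul_tsum hs hsp
  have e2 := hs.tsum_mul_tsum (g := fun q : ℕ × ℕ => u q.1 * u q.2) hsp hsf
  rw [e1, e2]
  exact h

lemma rpow_sq_a (x : ℝ) (hx : 0 ≤ x) : (x ^ 2) ^ (-(3 / 4) : ℝ) = x ^ (-(3 / 2) : ℝ) := by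
  rw [← Real.rpow_natCast, ← Real.rpow_mul hx]; norm_num

lemma rpow_sq_b (g a b : ℕ) : (((g * a ^ 2 : ℕ) : ℝ) ^ (-(3 / 4) : ℝ) * ((g * b ^ 2 : ℕ) : ℝ) ^ (-(3 / 4) : ℝ))
    = (g : ℝ) ^ (-(3 / 2) : ℝ) * ((a : ℝ) ^ (-(3 / 2) : ℝ) * (b : ℝ) ^ (-(3 / 2) : ℝ)) := by
  have hg : (0 : ℝ) ≤ g := Nat.cast_nonneg g
  have key2 : (g : ℝ) ^ (-(3 / 4) : ℝ) * (g : ℝ) ^ (-(3 / 4) : ℝ) = (g : ℝ) ^ (-(3 / 2) : ℝ) := by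
    rw [← Real.mul_rpow hg hg, ← sq, rpow_sq_a _ hg]
  push_cast
  rw [Real.mul_rpow hg (sq_nonneg _), Real.mul_rpow hg (sq_nonneg _),
      rpow_sq_a _ (Nat.cast_nonneg a), rpow_sq_a _ (Nat.cast_nonneg b), ← key2]
  ring

lemma diag_bound : ∃ Z : ℝ, 0 ≤ Z ∧ ∀ M : ℕ,
    ∑ p ∈ (Finset.Icc 1 M ×ˢ Finset.Icc 1 M).filter (fun p => IsSquare (p.1 * p.2)),
      ((p.1 : ℝ) ^ (-(3 / 4) : ℝ) * (p.2 : ℝ) ^ (-(3 / 4) : ℝ)) ≤ Z := by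
  have hs : Summable (fun n : ℕ => (n : ℝ) ^ (-(3 / 2) : ℝ)) := by
    rw [Real.summable_nat_rpow]; norm_num
  have hu : ∀ n : ℕ, 0 ≤ (n : ℝ) ^ (-(3 / 2) : ℝ) := fun n => Real.rpow_nonneg (Nat.cast_nonneg n) _
  have hT := triple_bound _ hu hs
  have hz0 : 0 ≤ ∑' n : ℕ, (n : ℝ) ^ (-(3 / 2) : ℝ) := tsum_nonneg hu
  refine ⟨_, mul_nonneg hz0 (mul_nonneg hz0 hz0), ?_⟩
  intro M
  generalize hA : (Finset.Icc 1 M ×ˢ Finset.Icc 1 M).filter (fun p => IsSquare (p.1 * p.2)) = A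
  have hex : ∀ p : ℕ × ℕ, ∃ q : ℕ × ℕ × ℕ, p ∈ A → p.1 = q.1 * q.2.1 ^ 2 ∧ p.2 = q.1 * q.2.2 ^ 2 := by
    intro p
    by_cases hp : p ∈ A
    · rw [← hA, Finset.mem_filter, Finset.mem_product, Finset.mem_Icc, Finset.mem_Icc] at hp
      obtain ⟨g, a, b, h1, h2⟩ := sq_pair p.1 p.2 hp.1.1.1 hp.1.2.1 hp.2
      exact ⟨(g, a, b), fun _ => ⟨h1, h2⟩⟩
    · exact ⟨(0, 0, 0), fun h => absurd h hp⟩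
  choose φ hφ using hex
  have hinj : Set.InjOn φ (A : Set (ℕ × ℕ)) := by
    intro p hp q hq hpq
    have h1 := hφ p hp
    have h2 := hφ q hq
    rw [hpq] at h1
    exact Prod.ext (h1.1.trans h2.1.symm) (h1.2.trans h2.2.symm)
  refine le_trans (le_of_eq ?_) (hT (A.image φ))
  rw [Finset.sum_image hinj]
  apply Finset.sum_congr rfl
  intro p hp
  obtain ⟨h1, h2⟩ := hφ p hp
  rw [← rpow_sq_b, ← h1, ← h2]

lemma second_moment (ε : ℝ) (hε : 0 < ε) : ∃ C : ℝ, 0 ≤ C ∧ ∀ (a : ℕ → ℂ),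
    (∀ m, 1 ≤ m → ‖a m‖ ≤ (m : ℝ) ^ (-(3 / 4 + ε))) → ∀ (b : ℤ) (M J : ℕ),
    ∑ j ∈ Finset.range J, ‖∑ m ∈ (Finset.Icc 1 M).filter Odd, a m * ((jacobiSym (b + 4 * j) m : ℤ) : ℂ)‖ ^ 2
      ≤ C * (J + (M : ℝ) ^ (3 / 2 : ℝ)) := by
  obtain ⟨Z, hZ0, hZ⟩ := diag_bound
  obtain ⟨K, hK0, hK⟩ := pv (2 / 3 * ε) (by positivity)
  refine ⟨Z + 2 * K, by positivity, ?_⟩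
  intro a ha b M J
  set O := (Finset.Icc 1 M).filter Odd with hO
  set x : ℕ → ℤ := fun j => b + 4 * j with hx
  have hOm : ∀ m ∈ O, 1 ≤ m ∧ m ≤ M ∧ Odd m := by
    intro m hm
    rw [hO, Finset.mem_filter, Finset.mem_Icc] at hm
    exact ⟨hm.1.1, hm.1.2, hm.2⟩
  have hexp : ((∑ j ∈ Finset.range J, ‖∑ m ∈ O, a m * ((jacobiSym (x j) m : ℤ) : ℂ)‖ ^ 2 : ℝ) : ℂ)
      = ∑ p ∈ O ×ˢ O, a p.1 * (starRingEnd ℂ) (a p.2) *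
          ((∑ j ∈ Finset.range J, (jacobiSym (x j) (p.1 * p.2) : ℝ) : ℝ) : ℂ) := by
    push_cast
    have : ∀ j ∈ Finset.range J, ((‖∑ m ∈ O, a m * ((jacobiSym (x j) m : ℤ) : ℂ)‖ : ℝ) : ℂ) ^ 2
        = ∑ p ∈ O ×ˢ O, a p.1 * (starRingEnd ℂ) (a p.2) * ((jacobiSym (x j) (p.1 * p.2) : ℤ) : ℂ) := by
      intro j _
      rw [← Complex.mul_conj', map_sum, Finset.sum_mul_sum, ← Finset.sum_product']
      apply Finset.sum_congr rfl
      intro p hp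
      rw [Finset.mem_product] at hp
      have h1 := hOm _ hp.1
      have h2 := hOm _ hp.2
      rw [jacobiSym.mul_right' _ (by omega) (by omega)]
      simp only [map_mul, Int.cast_mul, map_intCast]
      ring
    rw [Finset.sum_congr rfl this, Finset.sum_comm]
    apply Finset.sum_congr rfl
    intro p _
    rw [Finset.mul_sum]
  have hnn : 0 ≤ ∑ j ∈ Finset.range J, ‖∑ m ∈ O, a m * ((jacobiSym (x j) m : ℤ) : ℂ)‖ ^ 2 :=
    Finset.sum_nonneg fun j _ => by positivity
  have hle : ∑ j ∈ Finset.range J, ‖∑ m ∈ O, a m * ((jacobiSym (x j) m : ℤ) : ℂ)‖ ^ 2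
      ≤ ∑ p ∈ O ×ˢ O, ‖a p.1‖ * ‖a p.2‖ * |∑ j ∈ Finset.range J, (jacobiSym (x j) (p.1 * p.2) : ℝ)| := by
    rw [← Real.norm_of_nonneg hnn, ← Complex.norm_real, hexp]
    refine (norm_sum_le _ _).trans (Finset.sum_le_sum fun p _ => ?_)
    rw [norm_mul, norm_mul, RCLike.norm_conj, Complex.norm_real, Real.norm_eq_abs]
  refine hle.trans ?_
  have hterm : ∀ p ∈ O ×ˢ O, ‖a p.1‖ * ‖a p.2‖ * |∑ j ∈ Finset.range J, (jacobiSym (x j) (p.1 * p.2) : ℝ)|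
      ≤ (if IsSquare (p.1 * p.2) then J * ((p.1 : ℝ) ^ (-(3 / 4) : ℝ) * (p.2 : ℝ) ^ (-(3 / 4) : ℝ)) else 0)
        + K * ((p.1 : ℝ) ^ (3 / 4 - 1 : ℝ) * (p.2 : ℝ) ^ (3 / 4 - 1 : ℝ)) := by
    intro p hp
    rw [Finset.mem_product] at hp
    obtain ⟨h11, h12, h13⟩ := hOm _ hp.1
    obtain ⟨h21, h22, h23⟩ := hOm _ hp.2
    have r1 : (1 : ℝ) ≤ p.1 := by exact_mod_cast h11
    have r2 : (1 : ℝ) ≤ p.2 := by exact_mod_cast h21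
    have hpos : 0 ≤ K * ((p.1 : ℝ) ^ (3 / 4 - 1 : ℝ) * (p.2 : ℝ) ^ (3 / 4 - 1 : ℝ)) := by positivity
    split_ifs with hsq
    · have b1 : |∑ j ∈ Finset.range J, (jacobiSym (x j) (p.1 * p.2) : ℝ)| ≤ J := by
        refine (Finset.abs_sum_le_sum_abs _ _).trans ?_
        have : ∀ j ∈ Finset.range J, |(jacobiSym (x j) (p.1 * p.2) : ℝ)| ≤ 1 := by
          intro j _
          rcases jacobiSym.trichotomy (x j) (p.1 * p.2) with h | h | h <;> rw [h] <;> simp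
        refine (Finset.sum_le_sum this).trans ?_
        simp
      have c1 : ‖a p.1‖ ≤ (p.1 : ℝ) ^ (-(3 / 4) : ℝ) := (ha _ h11).trans
        (Real.rpow_le_rpow_of_exponent_le r1 (by linarith))
      have c2 : ‖a p.2‖ ≤ (p.2 : ℝ) ^ (-(3 / 4) : ℝ) := (ha _ h21).trans
        (Real.rpow_le_rpow_of_exponent_le r2 (by linarith))
      have : ‖a p.1‖ * ‖a p.2‖ * |∑ j ∈ Finset.range J, (jacobiSym (x j) (p.1 * p.2) : ℝ)|
          ≤ ((p.1 : ℝ) ^ (-(3 / 4) : ℝ) * (p.2 : ℝ) ^ (-(3 / 4) : ℝ)) * J := by gcongr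
      linarith
    · have hodd : Odd (p.1 * p.2) := h13.mul h23
      have hcop : IsCoprime (4 : ℤ) ((p.1 * p.2 : ℕ) : ℤ) := by
        have : Nat.Coprime 4 (p.1 * p.2) := by
          have h2 : Nat.Coprime 2 (p.1 * p.2) := Nat.coprime_two_left.2 hodd
          exact Nat.Coprime.pow_left 2 h2
        exact_mod_cast Nat.isCoprime_iff_coprime.2 this
      have b1 := hK (p.1 * p.2) hodd hsq b 4 hcop J
      have b2 : ‖a p.1‖ * ‖a p.2‖ * |∑ j ∈ Finset.range J, (jacobiSym (x j) (p.1 * p.2) : ℝ)|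
          ≤ (p.1 : ℝ) ^ (-(3 / 4 + ε)) * (p.2 : ℝ) ^ (-(3 / 4 + ε)) * (K * ((p.1 * p.2 : ℕ) : ℝ) ^ (1 / 2 + 2 / 3 * ε)) := by
        have := ha _ h11
        have := ha _ h21
        gcongr
      have key : ∀ y : ℝ, 1 ≤ y → y ^ (-(3 / 4 + ε)) * y ^ (1 / 2 + 2 / 3 * ε) ≤ y ^ (3 / 4 - 1 : ℝ) := by
        intro y hy
        rw [← Real.rpow_add (by linarith)]
        apply Real.rpow_le_rpow_of_exponent_le hy
        linarith
      have k1 := key _ r1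
      have k2 := key _ r2
      rw [zero_add]
      refine b2.trans ?_
      push_cast
      rw [Real.mul_rpow (by positivity) (by positivity)]
      calc _ = K * (((p.1 : ℝ) ^ (-(3 / 4 + ε)) * (p.1 : ℝ) ^ (1 / 2 + 2 / 3 * ε)) *
              ((p.2 : ℝ) ^ (-(3 / 4 + ε)) * (p.2 : ℝ) ^ (1 / 2 + 2 / 3 * ε))) := by ring
        _ ≤ _ := by gcongr
  refine (Finset.sum_le_sum hterm).trans ?_
  rw [Finset.sum_add_distrib, ← Finset.sum_filter, ← Finset.mul_sum, ← Finset.mul_sum]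
  have hsub : O ⊆ Finset.Icc 1 M := Finset.filter_subset _ _
  have d1 : ∑ p ∈ (O ×ˢ O).filter (fun p => IsSquare (p.1 * p.2)),
      ((p.1 : ℝ) ^ (-(3 / 4) : ℝ) * (p.2 : ℝ) ^ (-(3 / 4) : ℝ)) ≤ Z := by
    refine le_trans ?_ (hZ M)
    apply Finset.sum_le_sum_of_subset_of_nonneg
    · exact Finset.filter_subset_filter _ (Finset.product_subset_product hsub hsub)
    · intros; positivity
  have d2 : ∑ p ∈ O ×ˢ O, ((p.1 : ℝ) ^ (3 / 4 - 1 : ℝ) * (p.2 : ℝ) ^ (3 / 4 - 1 : ℝ))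
      ≤ 2 * (M : ℝ) ^ (3 / 2 : ℝ) := by
    have e : ∑ p ∈ O ×ˢ O, ((p.1 : ℝ) ^ (3 / 4 - 1 : ℝ) * (p.2 : ℝ) ^ (3 / 4 - 1 : ℝ))
        ≤ ∑ p ∈ Finset.Icc 1 M ×ˢ Finset.Icc 1 M, ((p.1 : ℝ) ^ (3 / 4 - 1 : ℝ) * (p.2 : ℝ) ^ (3 / 4 - 1 : ℝ)) := by
      apply Finset.sum_le_sum_of_subset_of_nonneg (Finset.product_subset_product hsub hsub)
      intros; positivity
    refine e.trans ?_
    rw [Finset.sum_product]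
    simp only []
    rw [← Finset.sum_mul_sum]
    have h := sum_rpow_le (3 / 4) (by norm_num) (by norm_num) M
    have h0 : 0 ≤ ∑ i ∈ Finset.Icc 1 M, ((i : ℕ) : ℝ) ^ (3 / 4 - 1 : ℝ) := Finset.sum_nonneg fun i _ => by positivity
    have e2 : (M : ℝ) ^ (3 / 2 : ℝ) = (M : ℝ) ^ (3 / 4 : ℝ) * (M : ℝ) ^ (3 / 4 : ℝ) := by
      rw [← Real.rpow_add_of_nonneg (by positivity) (by norm_num) (by norm_num)]; norm_num
    rw [e2]
    have := mul_le_mul h h h0 (h0.trans h)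
    have : 0 ≤ (M : ℝ) ^ (3 / 4 : ℝ) := by positivity
    nlinarith
  have hJ : (0 : ℝ) ≤ J := by positivity
  have hM : (0 : ℝ) ≤ (M : ℝ) ^ (3 / 2 : ℝ) := by positivity
  have f1 := mul_le_mul_of_nonneg_left d1 hJ
  have f2 := mul_le_mul_of_nonneg_left d2 hK0.le
  have f3 := mul_nonneg hK0.le hJ
  have f4 := mul_nonneg hZ0 hM
  linarith

/-- the hypothesis on the characters. -/
def JX (n : ℕ) (χ : DirichletCharacter ℂ (4 * n)) : Prop :=
  (∀ m : ℕ, Odd m → χ (m : ZMod (4 * n)) = ((jacobiSym (m : ℤ) n : ℤ) : ℂ)) ∧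
      (∀ m : ℕ, Even m → χ (m : ZMod (4 * n)) = 0)

lemma JX.partial {n : ℕ} {χ : DirichletCharacter ℂ (4 * n)} (h : JX n χ) (T : ℕ) :
    ∑ m ∈ Finset.range T, χ (m : ZMod (4 * n)) =
      ((∑ j ∈ Finset.range (T / 2), (jacobiSym (1 + 2 * (j : ℤ)) n : ℝ) : ℝ) : ℂ) := by
  induction T with
  | zero => simp
  | succ T ih =>
    rw [Finset.sum_range_succ, ih]
    rcases Nat.even_or_odd T with hT | hT
    · rw [h.2 T hT]
      have : (T + 1) / 2 = T / 2 := by obtain ⟨k, hk⟩ := hT; omega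
      rw [this, add_zero]
    · rw [h.1 T hT]
      obtain ⟨k, rfl⟩ := hT
      have e1 : (2 * k + 1 + 1) / 2 = k + 1 := by omega
      have e2 : (2 * k + 1) / 2 = k := by omega
      rw [e1, e2, Finset.sum_range_succ]
      push_cast
      rw [add_comm (1 : ℤ)]

lemma JX.ne_one {n : ℕ} {χ : DirichletCharacter ℂ (4 * n)} (h : JX n χ) (hn : Odd n)
    (hsq : ¬ IsSquare n) : χ ≠ 1 := by
  intro h1
  obtain ⟨K, hK0, hK⟩ := pv 1 one_pos
  have hn0 : 0 < n := hn.pos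
  obtain ⟨J, hJ⟩ := exists_nat_gt (K * (n : ℝ) ^ (1 / 2 + 1 : ℝ))
  have hc : IsCoprime (2 : ℤ) (n : ℤ) := by
    exact_mod_cast Nat.isCoprime_iff_coprime.2 (Nat.coprime_two_left.2 hn)
  have hb := hK n hn hsq 1 2 hc (n * J)
  have hnn : ∀ j : ℕ, (0 : ℝ) ≤ (jacobiSym (1 + 2 * (j : ℤ)) n : ℝ) := by
    intro j
    have h2 := h.1 (2 * j + 1) ⟨j, rfl⟩
    have h3 : (((2 * j + 1 : ℕ) : ℤ)) = 1 + 2 * (j : ℤ) := by push_cast; ring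
    rw [h3] at h2
    rcases jacobiSym.trichotomy (1 + 2 * (j : ℤ)) n with h4 | h4 | h4
    · rw [h4]; simp
    · rw [h4]; simp
    · exfalso
      rw [h4, h1] at h2
      by_cases hu : IsUnit ((2 * j + 1 : ℕ) : ZMod (4 * n))
      · rw [MulChar.one_apply hu] at h2; norm_num at h2
      · rw [MulChar.map_nonunit _ hu] at h2; norm_num at h2
  have hone : ∀ i : ℕ, (jacobiSym (1 + 2 * ((n * i : ℕ) : ℤ)) n : ℝ) = 1 := by
    intro i
    rw [jacobiSym.mod_left]
    have : (1 + 2 * ((n * i : ℕ) : ℤ)) % (n : ℤ) = 1 % (n : ℤ) := by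
      push_cast
      rw [show (1 : ℤ) + 2 * (n * i) = 1 + n * (2 * i) by ring, Int.add_mul_emod_self_left]
    rw [this, ← jacobiSym.mod_left, jacobiSym.one_left]; simp
  have hle : (J : ℝ) ≤ ∑ j ∈ Finset.range (n * J), (jacobiSym (1 + 2 * (j : ℤ)) n : ℝ) := by
    have hinj : Function.Injective (fun i : ℕ => n * i) := fun a b hab => Nat.eq_of_mul_eq_mul_left hn0 hab
    have hsub : (Finset.range J).image (fun i => n * i) ⊆ Finset.range (n * J) := by
      intro x hx
      rw [Finset.mem_image] at hx
      obtain ⟨i, hi, rfl⟩ := hx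
      rw [Finset.mem_range] at hi ⊢
      exact Nat.mul_lt_mul_of_pos_left hi hn0
    refine le_trans (le_of_eq ?_) (Finset.sum_le_sum_of_subset_of_nonneg hsub (fun j _ _ => hnn j))
    rw [Finset.sum_image hinj.injOn, Finset.sum_congr rfl (fun i _ => hone i)]
    simp
  have := le_abs_self (∑ j ∈ Finset.range (n * J), (jacobiSym (1 + 2 * (j : ℤ)) n : ℝ))
  linarith

lemma JX.tail (ε : ℝ) (hε : 0 < ε) : ∃ K : ℝ, 0 < K ∧ ∀ (n : ℕ) (χ : DirichletCharacter ℂ (4 * n)) [NeZero (4 * n)],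
    JX n χ → Odd n → ¬ IsSquare n → ∀ (w : ℂ), 0 < w.re → ∀ M : ℕ,
    ‖χ.LFunction w - ∑ m ∈ (Finset.Icc 1 M).filter Odd, (m : ℂ) ^ (-w) * ((jacobiSym (m : ℤ) n : ℤ) : ℂ)‖
      ≤ 2 * (K * (n : ℝ) ^ (1 / 2 + ε)) * (‖w‖ / w.re) * ((M + 1 : ℕ) : ℝ) ^ (-w.re) := by
  obtain ⟨K, hK0, hK⟩ := pv ε hε
  refine ⟨K, hK0, ?_⟩
  intro n χ _ h hn hsq w hw M
  have hc : IsCoprime (2 : ℤ) (n : ℤ) := by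
    exact_mod_cast Nat.isCoprime_iff_coprime.2 (Nat.coprime_two_left.2 hn)
  have h0 : χ 0 = 0 := by
    have := h.2 0 (by simp)
    simpa using this
  have := LFunction_tail (4 * n) χ (h.ne_one hn hsq) h0 (K * (n : ℝ) ^ (1 / 2 + ε)) (by
    intro T
    rw [h.partial, Complex.norm_real, Real.norm_eq_abs]
    exact hK n hn hsq 1 2 hc (T / 2)) w hw M
  have e : ∑ i ∈ Finset.range M, χ ((i + 1 : ℕ) : ZMod (4 * n)) * ((i + 1 : ℕ) : ℂ) ^ (-w)
      = ∑ m ∈ (Finset.Icc 1 M).filter Odd, (m : ℂ) ^ (-w) * ((jacobiSym (m : ℤ) n : ℤ) : ℂ) := by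
    rw [Finset.sum_filter, Finset.range_eq_Ico, Finset.sum_Ico_add' (fun i : ℕ => χ (i : ZMod (4 * n)) * (i : ℂ) ^ (-w)) 0 M 1]
    have : Finset.Ico (0 + 1) (M + 1) = Finset.Icc 1 M := by ext; simp
    rw [this]
    apply Finset.sum_congr rfl
    intro m _
    split_ifs with hm
    · rw [h.1 m hm]; ring
    · rw [h.2 m (Nat.not_odd_iff_even.1 hm)]; ring
  rw [e] at this
  exact this

lemma recip_sign (r : ℕ) (hr : r = 1 ∨ r = 3) : ∃ e : ℕ → ℂ, (∀ m, ‖e m‖ ≤ 1) ∧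
    ∀ j m : ℕ, Odd m → ((jacobiSym (m : ℤ) (4 * j + r) : ℤ) : ℂ) = e m * ((jacobiSym ((r : ℤ) + 4 * j) m : ℤ) : ℂ) := by
  have cast : ∀ j : ℕ, ((r : ℤ) + 4 * j) = ((4 * j + r : ℕ) : ℤ) := by intro j; push_cast; ring
  rcases hr with rfl | rfl
  · refine ⟨fun _ => 1, by simp, ?_⟩
    intro j m hm
    rw [cast, jacobiSym.quadratic_reciprocity_one_mod_four' hm (by omega)]; simp
  · refine ⟨fun m => if m % 4 = 1 then 1 else -1, ?_, ?_⟩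
    · intro m; dsimp only; split_ifs <;> simp
    · intro j m hm
      rw [cast]
      have hodd : Odd (4 * j + 3) := ⟨2 * j + 1, by ring⟩
      dsimp only
      split_ifs with h
      · rw [jacobiSym.quadratic_reciprocity_one_mod_four h hodd]; simp
      · have h3 : m % 4 = 3 := by obtain ⟨k, rfl⟩ := hm; omega
        rw [jacobiSym.quadratic_reciprocity_three_mod_four h3 (by omega)]; simp

lemma nz_of_odd {n : ℕ} (h : Odd n) : NeZero (4 * n) :=
  ⟨by rcases h with ⟨k, rfl⟩; omega⟩

/-- total version of the L-value. -/
def Lval (ξ : (n : ℕ) → DirichletCharacter ℂ (4 * n)) (w : ℂ) (n : ℕ) : ℂ :=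
  if h : Odd n then
    haveI : NeZero (4 * n) := nz_of_odd h
    (ξ n).LFunction w
  else 0

lemma L2_class (ξ : (n : ℕ) → DirichletCharacter ℂ (4 * n)) (hξ : ∀ n, Odd n → JX n (ξ n))
    (w : ℂ) (hw : 3 / 4 < w.re) (r : ℕ) (hr : r = 1 ∨ r = 3) :
    ∃ C : ℝ, 0 ≤ C ∧ ∀ Y : ℕ, ∑ j ∈ Finset.range Y,
      (if IsSquare (4 * j + r) then 0 else ‖Lval ξ w (4 * j + r)‖ ^ 2) ≤ C * Y := by
  set ε := w.re - 3 / 4 with hε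
  have hε0 : 0 < ε := by linarith
  obtain ⟨K, hK0, hK⟩ := JX.tail (2 / 3 * ε) (by positivity)
  obtain ⟨C, hC0, hC⟩ := second_moment ε hε0
  obtain ⟨e, he1, he⟩ := recip_sign r hr
  have hw0 : 0 < w.re := by linarith
  set D := 2 * K * (‖w‖ / w.re) with hD
  have hD0 : 0 ≤ D := by positivity
  refine ⟨10 * C + 2 * D ^ 2, by positivity, ?_⟩
  intro Y
  rcases Nat.eq_zero_or_pos Y with rfl | hY
  · simp
  set X : ℝ := 4 * Y with hX
  have hY1 : (1 : ℝ) ≤ Y := by exact_mod_cast hY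
  have hX0 : 0 < X := by positivity
  set M := ⌊X ^ (2 / 3 : ℝ)⌋₊ with hM
  have hM1 : X ^ (2 / 3 : ℝ) ≤ ((M + 1 : ℕ) : ℝ) := by
    push_cast; exact (Nat.lt_floor_add_one _).le
  have hM2 : (M : ℝ) ^ (3 / 2 : ℝ) ≤ X := by
    have : (M : ℝ) ≤ X ^ (2 / 3 : ℝ) := Nat.floor_le (by positivity)
    calc (M : ℝ) ^ (3 / 2 : ℝ) ≤ (X ^ (2 / 3 : ℝ)) ^ (3 / 2 : ℝ) := by gcongr
      _ = X := by rw [← Real.rpow_mul hX0.le]; norm_num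
  set a : ℕ → ℂ := fun m => (m : ℂ) ^ (-w) * e m with ha
  have hsm := hC a (by
    intro m hm
    rw [ha, norm_mul, Complex.norm_natCast_cpow_of_pos (by omega), Complex.neg_re]
    have : -w.re = -(3 / 4 + ε) := by rw [hε]; ring
    rw [this]
    exact mul_le_of_le_one_right (by positivity) (he1 m)) r M Y
  have hterm : ∀ j ∈ Finset.range Y, (if IsSquare (4 * j + r) then 0 else ‖Lval ξ w (4 * j + r)‖ ^ 2)
      ≤ 2 * ‖∑ m ∈ (Finset.Icc 1 M).filter Odd, a m * ((jacobiSym ((r : ℤ) + 4 * j) m : ℤ) : ℂ)‖ ^ 2 + 2 * D ^ 2 := by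
    intro j hj
    rw [Finset.mem_range] at hj
    split_ifs with hsq
    · positivity
    · have hodd : Odd (4 * j + r) := by rcases hr with rfl | rfl
                                        · exact ⟨2 * j, by ring⟩
                                        · exact ⟨2 * j + 1, by ring⟩
      have hnz : NeZero (4 * (4 * j + r)) := ⟨by have := hodd.pos; omega⟩
      have hL : Lval ξ w (4 * j + r) = (ξ (4 * j + r)).LFunction w := by
        rw [Lval, dif_pos hodd]
      have ht := hK (4 * j + r) (ξ (4 * j + r)) (hξ _ hodd) hodd hsq w hw0 M
      rw [← hL] at ht
      have hh : ∑ m ∈ (Finset.Icc 1 M).filter Odd, (m : ℂ) ^ (-w) * ((jacobiSym (m : ℤ) (4 * j + r) : ℤ) : ℂ)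
          = ∑ m ∈ (Finset.Icc 1 M).filter Odd, a m * ((jacobiSym ((r : ℤ) + 4 * j) m : ℤ) : ℂ) := by
        apply Finset.sum_congr rfl
        intro m hm
        rw [Finset.mem_filter] at hm
        rw [he j m hm.2, ha]; ring
      rw [hh] at ht
      have hn : ((4 * j + r : ℕ) : ℝ) ≤ X := by
        have : 4 * j + r ≤ 4 * Y := by rcases hr with rfl | rfl <;> omega
        rw [hX]; exact_mod_cast this
      have hb : ((4 * j + r : ℕ) : ℝ) ^ (1 / 2 + 2 / 3 * ε) * ((M + 1 : ℕ) : ℝ) ^ (-w.re) ≤ 1 := by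
        have b1 : ((4 * j + r : ℕ) : ℝ) ^ (1 / 2 + 2 / 3 * ε) ≤ X ^ (1 / 2 + 2 / 3 * ε) := by gcongr
        have b2 : ((M + 1 : ℕ) : ℝ) ^ (-w.re) ≤ (X ^ (2 / 3 : ℝ)) ^ (-w.re) :=
          Real.rpow_le_rpow_of_nonpos (by positivity) hM1 (by linarith)
        calc _ ≤ X ^ (1 / 2 + 2 / 3 * ε) * (X ^ (2 / 3 : ℝ)) ^ (-w.re) := by gcongr
          _ = 1 := by
            rw [← Real.rpow_mul hX0.le, ← Real.rpow_add hX0, hε]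
            ring_nf
            simp
      have hb2 : 2 * (K * ((4 * j + r : ℕ) : ℝ) ^ (1 / 2 + 2 / 3 * ε)) * (‖w‖ / w.re) * ((M + 1 : ℕ) : ℝ) ^ (-w.re) ≤ D := by
        calc _ = D * (((4 * j + r : ℕ) : ℝ) ^ (1 / 2 + 2 / 3 * ε) * ((M + 1 : ℕ) : ℝ) ^ (-w.re)) := by rw [hD]; ring
          _ ≤ D * 1 := by gcongr
          _ = D := mul_one D
      have ht2 := ht.trans hb2
      set H := ∑ m ∈ (Finset.Icc 1 M).filter Odd, a m * ((jacobiSym ((r : ℤ) + 4 * j) m : ℤ) : ℂ)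
      have hle : ‖Lval ξ w (4 * j + r)‖ ≤ ‖H‖ + D := by
        have := norm_add_le (Lval ξ w (4 * j + r) - H) H
        rw [sub_add_cancel] at this
        linarith
      have h0 := norm_nonneg (Lval ξ w (4 * j + r))
      nlinarith [sq_nonneg (‖H‖ - D), pow_le_pow_left₀ h0 hle 2]
  refine (Finset.sum_le_sum hterm).trans ?_
  rw [Finset.sum_add_distrib, ← Finset.mul_sum]
  have : ∑ j ∈ Finset.range Y, 2 * D ^ 2 = 2 * D ^ 2 * Y := by simp; ring
  rw [this]
  have h5 : C * (Y + (M : ℝ) ^ (3 / 2 : ℝ)) ≤ C * (Y + X) := by gcongr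
  have := hsm.trans h5
  rw [hX] at this
  linarith

lemma L2_sum (ξ : (n : ℕ) → DirichletCharacter ℂ (4 * n)) (hξ : ∀ n, Odd n → JX n (ξ n))
    (w : ℂ) (hw : 3 / 4 < w.re) :
    ∃ C : ℝ, 0 ≤ C ∧ ∀ n : ℕ, ∑ k ∈ Finset.Icc 1 n,
      (if IsSquare k then 0 else ‖Lval ξ w k‖ ^ 2) ≤ C * n := by
  obtain ⟨C1, h10, h1⟩ := L2_class ξ hξ w hw 1 (Or.inl rfl)
  obtain ⟨C3, h30, h3⟩ := L2_class ξ hξ w hw 3 (Or.inr rfl)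
  set g : ℕ → ℝ := fun k => if IsSquare k then 0 else ‖Lval ξ w k‖ ^ 2 with hg
  have hg0 : ∀ k, 0 ≤ g k := by intro k; simp only [hg]; split_ifs <;> positivity
  have heven : ∀ k, Even k → g k = 0 := by
    intro k hk
    simp only [hg]
    rw [Lval, dif_neg (Nat.not_odd_iff_even.2 hk)]; simp
  have hfour : ∀ Y, ∑ k ∈ Finset.range (4 * Y), g k = ∑ j ∈ Finset.range Y, g (4 * j + 1) + ∑ j ∈ Finset.range Y, g (4 * j + 3) := by
    intro Y
    induction Y with
    | zero => simp
    | succ Y ih =>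
      rw [show 4 * (Y + 1) = 4 * Y + 1 + 1 + 1 + 1 by ring]
      simp only [Finset.sum_range_succ, ih]
      rw [heven (4 * Y) ⟨2 * Y, by ring⟩, heven (4 * Y + 1 + 1) ⟨2 * Y + 1, by ring⟩]
      ring
  refine ⟨2 * (C1 + C3), by positivity, ?_⟩
  intro n
  rcases Nat.eq_zero_or_pos n with rfl | hn
  · simp
  have hsub : Finset.Icc 1 n ⊆ Finset.range (4 * (n / 4 + 1)) := by
    intro x hx
    rw [Finset.mem_Icc] at hx
    rw [Finset.mem_range]
    omega
  refine (Finset.sum_le_sum_of_subset_of_nonneg hsub (fun k _ _ => hg0 k)).trans ?_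
  rw [hfour]
  have a1 := h1 (n / 4 + 1)
  have a3 := h3 (n / 4 + 1)
  have : ((n / 4 + 1 : ℕ) : ℝ) ≤ 2 * n := by
    have : n / 4 + 1 ≤ 2 * n := by omega
    exact_mod_cast this
  have b1 := mul_le_mul_of_nonneg_left this h10
  have b3 := mul_le_mul_of_nonneg_left this h30
  simp only [hg] at *
  linarith

lemma nonsq_summable (ξ : (n : ℕ) → DirichletCharacter ℂ (4 * n)) (hξ : ∀ n, Odd n → JX n (ξ n))
    (w : ℂ) (hw : 3 / 4 < w.re) (σ : ℝ) (hσ : 1 < σ) :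
    Summable (fun n : ℕ => if IsSquare n then 0 else ‖Lval ξ w n‖ * (n : ℝ) ^ (-σ)) := by
  obtain ⟨C, hC0, hC⟩ := L2_sum ξ hξ w hw
  set g : ℕ → ℝ := fun k => if IsSquare k then 0 else ‖Lval ξ w k‖ ^ 2 with hg
  have hg0 : ∀ k, 0 ≤ g k := by intro k; simp only [hg]; split_ifs <;> positivity
  have hS : LSeriesSummable (fun k => (g k : ℂ)) (σ : ℂ) := by
    apply LSeriesSummable_of_sum_norm_bigO (r := 1) _ zero_le_one (by simpa using hσ)
    apply Asymptotics.IsBigO.of_bound C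
    filter_upwards with n
    have : ∑ k ∈ Finset.Icc 1 n, ‖(g k : ℂ)‖ = ∑ k ∈ Finset.Icc 1 n, g k :=
      Finset.sum_congr rfl fun k _ => by rw [Complex.norm_real, Real.norm_of_nonneg (hg0 k)]
    rw [this, Real.rpow_one, Real.norm_of_nonneg (Finset.sum_nonneg fun k _ => hg0 k), Real.norm_of_nonneg (by positivity)]
    exact hC n
  have hS2 := hS.norm
  have hz : Summable (fun n : ℕ => (n : ℝ) ^ (-σ)) := by
    rw [Real.summable_nat_rpow]; linarith
  refine Summable.of_nonneg_of_le (fun n => ?_) (fun n => ?_) (hz.add hS2)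
  · split_ifs <;> positivity
  · rcases Nat.eq_zero_or_pos n with rfl | hn
    · simp [Real.zero_rpow (by linarith : -σ ≠ 0)]
    · rw [LSeries.norm_term_eq, if_neg (show ¬ n = 0 by omega), Complex.norm_real, Real.norm_of_nonneg (hg0 n), Complex.ofReal_re]
      have hp : (0 : ℝ) < (n : ℝ) ^ σ := by positivity
      rw [Real.rpow_neg (by positivity), ← one_div]
      simp only [hg]
      split_ifs
      · positivity
      · rw [mul_one_div, ← add_div]
        gcongr
        nlinarith [sq_nonneg (‖Lval ξ w n‖ - 1)]

lemma local_bound (p : ℕ) (hp : 2 ≤ p) (w : ℂ) (hw : 3 / 4 ≤ w.re) :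
    ‖(1 - (p : ℂ) ^ (-(2 * w)))⁻¹‖ ≤ Real.exp (2 * (p : ℝ) ^ (-(3 / 2) : ℝ)) := by
  have hp1 : (1 : ℝ) ≤ p := by exact_mod_cast (by omega : 1 ≤ p)
  have hp2 : (2 : ℝ) ≤ p := by exact_mod_cast hp
  have hx : ‖(p : ℂ) ^ (-(2 * w))‖ ≤ (p : ℝ) ^ (-(3 / 2) : ℝ) := by
    rw [Complex.norm_natCast_cpow_of_pos (by omega)]
    apply Real.rpow_le_rpow_of_exponent_le hp1
    simp; linarith
  set x := (p : ℝ) ^ (-(3 / 2) : ℝ) with hxd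
  have hx0 : 0 ≤ x := by positivity
  have hx2 : x ≤ 1 / 2 := by
    have : x ≤ (p : ℝ) ^ (-1 : ℝ) := Real.rpow_le_rpow_of_exponent_le hp1 (by norm_num)
    rw [Real.rpow_neg_one] at this
    refine this.trans ?_
    rw [← one_div]
    exact one_div_le_one_div_of_le (by norm_num) hp2
  have h1 : 1 - x ≤ ‖1 - (p : ℂ) ^ (-(2 * w))‖ := by
    have := norm_sub_norm_le (1 : ℂ) ((p : ℂ) ^ (-(2 * w)))
    rw [norm_one] at this
    linarith
  rw [norm_inv]
  calc _ ≤ (1 - x)⁻¹ := inv_anti₀ (by linarith) h1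
    _ ≤ 2 * x + 1 := by
      rw [inv_le_iff_one_le_mul₀ (by linarith)]
      nlinarith
    _ ≤ _ := Real.add_one_le_exp _

lemma aF_bound : ∃ A : ℝ, 0 ≤ A ∧ ∀ w : ℂ, 3 / 4 ≤ w.re → ∀ m : ℕ, ‖aF (2 * w) m‖ ≤ A := by
  have hs : Summable (fun n : ℕ => 2 * (n : ℝ) ^ (-(3 / 2) : ℝ)) := by
    apply Summable.mul_left
    rw [Real.summable_nat_rpow]; norm_num
  refine ⟨Real.exp (∑' n : ℕ, 2 * (n : ℝ) ^ (-(3 / 2) : ℝ)), (Real.exp_pos _).le, ?_⟩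
  intro w hw m
  rw [aF, norm_prod]
  refine (Finset.prod_le_prod (fun p _ => norm_nonneg _) (fun p hp =>
    local_bound p (Nat.prime_of_mem_primeFactors hp).two_le w hw)).trans ?_
  rw [← Real.exp_sum]
  exact Real.exp_le_exp.2 (hs.sum_le_tsum _ (fun n _ => by positivity))

lemma JX.eq_one {n : ℕ} {χ : DirichletCharacter ℂ (4 * n)} (h : JX n χ) (hn : Odd n)
    (hsq : IsSquare n) : χ = 1 := by
  have hn0 := hn.pos
  have : NeZero (4 * n) := ⟨by omega⟩
  apply MulChar.ext
  intro a
  rw [MulChar.one_apply_coe]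
  have hc := ZMod.val_coe_unit_coprime a
  have hv : (((a : ZMod (4 * n)).val : ℕ) : ZMod (4 * n)) = (a : ZMod (4 * n)) := ZMod.natCast_zmod_val _
  set v := (a : ZMod (4 * n)).val
  have hodd : Odd v := by
    rw [← Nat.coprime_two_right]
    exact Nat.Coprime.coprime_dvd_right ⟨2 * n, by ring⟩ hc
  rw [← hv, h.1 v hodd]
  obtain ⟨k, rfl⟩ := hsq
  have hk : Int.gcd (v : ℤ) (k : ℤ) = 1 := by
    rw [Int.gcd_natCast_natCast]
    exact Nat.Coprime.coprime_dvd_right ⟨4 * k, by ring⟩ hc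
  rw [← sq, jacobiSym.pow_right, jacobiSym.sq_one hk]
  simp

lemma Lval_sq (ξ : (n : ℕ) → DirichletCharacter ℂ (4 * n)) (hξ : ∀ n, Odd n → JX n (ξ n))
    (n : ℕ) (hn : Odd n) (hsq : IsSquare n) (w : ℂ) (hw : w ≠ 1) :
    Lval ξ w n = (∏ p ∈ (4 * n).primeFactors, (1 - (p : ℂ) ^ (-w))) * riemannZeta w := by
  have : NeZero (4 * n) := ⟨by have := hn.pos; omega⟩
  rw [Lval, dif_pos hn, (hξ n hn).eq_one hn hsq]
  exact DirichletCharacter.LFunctionTrivChar_eq_mul_riemannZeta hw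

lemma primeFactors_four (n : ℕ) (hn : n ≠ 0) : (4 * n).primeFactors = (2 * n).primeFactors := by
  rw [Nat.primeFactors_mul (by norm_num) hn, Nat.primeFactors_mul (by norm_num) hn,
    show 4 = 2 ^ 2 by norm_num, Nat.primeFactors_pow _ (by norm_num)]

lemma prod_bound (k : ℕ) (hk : k ≠ 0) (w : ℂ) (hw : 0 < w.re) :
    ‖∏ p ∈ (4 * (k * k)).primeFactors, (1 - (p : ℂ) ^ (-w))‖ ≤ 2 * k := by
  have e : (4 * (k * k)).primeFactors = (2 * k).primeFactors := by
    rw [show 4 * (k * k) = (2 * k) ^ 2 by ring, Nat.primeFactors_pow _ (by norm_num)]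
  rw [e, norm_prod]
  calc _ ≤ ∏ p ∈ (2 * k).primeFactors, (p : ℝ) := by
        apply Finset.prod_le_prod (fun p _ => norm_nonneg _)
        intro p hp
        have hp2 := (Nat.prime_of_mem_primeFactors hp).two_le
        have hp2r : (2 : ℝ) ≤ p := by exact_mod_cast hp2
        have : ‖(p : ℂ) ^ (-w)‖ ≤ 1 := by
          rw [Complex.norm_natCast_cpow_of_pos (by omega)]
          exact Real.rpow_le_one_of_one_le_of_nonpos (by linarith) (by simp; linarith)
        have h2 := norm_sub_le (1 : ℂ) ((p : ℂ) ^ (-w))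
        rw [norm_one] at h2
        linarith
    _ ≤ 2 * k := by
        have := Nat.le_of_dvd (by omega) (Nat.prod_primeFactors_dvd (2 * k))
        have h2 : ((∏ p ∈ (2 * k).primeFactors, p : ℕ) : ℝ) ≤ ((2 * k : ℕ) : ℝ) := Nat.cast_le.2 this
        push_cast at h2
        exact h2

lemma Lval_sq_bound (ξ : (n : ℕ) → DirichletCharacter ℂ (4 * n)) (hξ : ∀ n, Odd n → JX n (ξ n))
    (n : ℕ) (hsq : IsSquare n) (w : ℂ) (hw : w ≠ 1) (hw0 : 0 < w.re) :
    ‖Lval ξ w n‖ ≤ 2 * √(n : ℝ) * ‖riemannZeta w‖ := by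
  by_cases hn : Odd n
  · rw [Lval_sq ξ hξ n hn hsq w hw, norm_mul]
    obtain ⟨k, rfl⟩ := hsq
    have hk : k ≠ 0 := by rintro rfl; simp at hn
    have := prod_bound k hk w hw0
    push_cast
    rw [Real.sqrt_mul_self (by positivity)]
    gcongr
  · rw [Lval, dif_neg hn, norm_zero]; positivity

lemma sq_weight_summable (σ : ℝ) (hσ : 1 < σ) :
    Summable (fun n : ℕ => if IsSquare n then 2 * √(n : ℝ) * (n : ℝ) ^ (-σ) else 0) := by
  have hinj : Function.Injective (fun k : ℕ => k * k) := fun a b h => by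
    have : a ^ 2 = b ^ 2 := by simpa [sq] using h
    exact Nat.pow_left_injective (by norm_num : (2:ℕ) ≠ 0) this
  rw [← hinj.summable_iff]
  · have : Summable (fun k : ℕ => 2 * (k : ℝ) ^ (1 - 2 * σ)) := by
      apply Summable.mul_left
      rw [Real.summable_nat_rpow]; linarith
    refine this.congr fun k => ?_
    simp only [Function.comp]
    rw [if_pos ⟨k, rfl⟩]
    push_cast
    rw [Real.sqrt_mul_self (by positivity)]
    rcases Nat.eq_zero_or_pos k with rfl | hk
    · simp [Real.zero_rpow (by linarith : 1 - 2 * σ ≠ 0)]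
    · have : (0 : ℝ) < k := by positivity
      rw [Real.mul_rpow this.le this.le, ← Real.rpow_add this, mul_assoc]
      nth_rw 2 [← Real.rpow_one (k : ℝ)]
      rw [← Real.rpow_add this]
      ring_nf
  · intro x hx
    rw [if_neg]
    rintro ⟨k, rfl⟩
    exact hx ⟨k, rfl⟩

/-- the general term. -/
def tm (ξ : (n : ℕ) → DirichletCharacter ℂ (4 * n)) (s w : ℂ) (n : ℕ) : ℂ :=
  if h : Odd n then
        haveI : NeZero (4 * n) := nz_of_odd h
        ((ZMod.χ₈ (n : ZMod 8) : ℤ) : ℂ) * (ξ n).LFunction w * aF (2 * w) (4 * n) *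
          (n : ℂ) ^ (-s) else 0

lemma tm_eq (ξ : (n : ℕ) → DirichletCharacter ℂ (4 * n)) (s w : ℂ) (n : ℕ) :
    tm ξ s w n = ((ZMod.χ₈ (n : ZMod 8) : ℤ) : ℂ) * Lval ξ w n * aF (2 * w) (4 * n) * (n : ℂ) ^ (-s) := by
  rw [tm, Lval]
  split_ifs <;> simp

lemma chi8_norm (n : ℕ) : ‖((ZMod.χ₈ (n : ZMod 8) : ℤ) : ℂ)‖ ≤ 1 := by
  rw [ZMod.χ₈_nat_eq_if_mod_eight]
  split_ifs <;> simp

lemma tm_norm_le (A : ℝ) (hA0 : 0 ≤ A) (hA : ∀ w : ℂ, 3 / 4 ≤ w.re → ∀ m : ℕ, ‖aF (2 * w) m‖ ≤ A)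
    (ξ : (n : ℕ) → DirichletCharacter ℂ (4 * n)) (s w : ℂ) (hw : 3 / 4 ≤ w.re) (n : ℕ) :
    ‖tm ξ s w n‖ ≤ A * (‖Lval ξ w n‖ * (n : ℝ) ^ (-s.re)) := by
  rcases Nat.eq_zero_or_pos n with rfl | hn
  · rw [tm, dif_neg (by simp), norm_zero]; positivity
  rw [tm_eq, norm_mul, norm_mul, norm_mul, Complex.norm_natCast_cpow_of_pos hn, Complex.neg_re]
  calc _ ≤ 1 * ‖Lval ξ w n‖ * A * (n : ℝ) ^ (-s.re) := by
        gcongr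
        · exact chi8_norm n
        · exact hA w hw _
    _ = _ := by ring

lemma part_one (ξ : (n : ℕ) → DirichletCharacter ℂ (4 * n)) (hξ : ∀ n, Odd n → JX n (ξ n))
    (s : ℂ) (hs : 1 < s.re) (w : ℂ) (hw : 3 / 4 < w.re) (hw1 : w ≠ 1) :
    Summable (fun n => ‖tm ξ s w n‖) := by
  obtain ⟨A, hA0, hA⟩ := aF_bound
  have h1 := nonsq_summable ξ hξ w hw s.re hs
  have h2 := (sq_weight_summable s.re hs).mul_left ‖riemannZeta w‖
  refine Summable.of_nonneg_of_le (fun n => norm_nonneg _) (fun n => ?_) ((h1.add h2).mul_left A)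
  refine (tm_norm_le A hA0 hA ξ s w hw.le n).trans ?_
  gcongr
  split_ifs with hsq
  · have := Lval_sq_bound ξ hξ n hsq w hw1 (by linarith)
    rw [zero_add]
    calc _ ≤ 2 * √(n : ℝ) * ‖riemannZeta w‖ * (n : ℝ) ^ (-s.re) := by gcongr
      _ = _ := by ring
  · simp

lemma Lval_near (ξ : (n : ℕ) → DirichletCharacter ℂ (4 * n)) (hξ : ∀ n, Odd n → JX n (ξ n))
    (δ : ℝ) (hδ : 0 < δ) (hδ1 : δ ≤ 1 / 8) : ∃ C : ℝ, 0 ≤ C ∧ ∀ (n : ℕ), ¬ IsSquare n → ∀ w : ℂ, ‖w - 1‖ < δ →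
    ‖Lval ξ w n‖ ≤ C * (n : ℝ) ^ δ := by
  obtain ⟨K, hK0, hK⟩ := JX.tail (1 / 4) (by norm_num)
  refine ⟨6 * K + 1 / δ, by positivity, ?_⟩
  intro n hsq w hw
  by_cases hn : Odd n
  swap
  · rw [Lval, dif_neg hn, norm_zero]; positivity
  have hn0 := hn.pos
  have hnz : NeZero (4 * n) := ⟨by omega⟩
  have hre : 1 - δ ≤ w.re := by
    have := Complex.abs_re_le_norm (w - 1)
    rw [Complex.sub_re, Complex.one_re] at this
    have := neg_abs_le (w.re - 1)
    linarith
  have hnw : ‖w‖ ≤ 9 / 8 := by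
    have := norm_add_le (w - 1) 1
    rw [sub_add_cancel, norm_one] at this
    linarith
  have hwp : 0 < w.re := by linarith
  have ht := hK n (ξ n) (hξ n hn) hn hsq w hwp n
  have hL : Lval ξ w n = (ξ n).LFunction w := by rw [Lval, dif_pos hn]
  rw [← hL] at ht
  have hn1 : (1 : ℝ) ≤ n := by exact_mod_cast hn0
  have hδn : 1 ≤ (n : ℝ) ^ δ := Real.one_le_rpow hn1 hδ.le
  have hb : (n : ℝ) ^ (1 / 2 + 1 / 4 : ℝ) * ((n + 1 : ℕ) : ℝ) ^ (-w.re) ≤ 1 := by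
    have : ((n + 1 : ℕ) : ℝ) ^ (-w.re) ≤ (n : ℝ) ^ (-w.re) :=
      Real.rpow_le_rpow_of_nonpos (by positivity) (by push_cast; linarith) (by linarith)
    calc _ ≤ (n : ℝ) ^ (1 / 2 + 1 / 4 : ℝ) * (n : ℝ) ^ (-w.re) := by gcongr
      _ ≤ 1 := by
        rw [← Real.rpow_add (by linarith)]
        exact Real.rpow_le_one_of_one_le_of_nonpos hn1 (by linarith)
  have hq : ‖w‖ / w.re ≤ 3 := by
    rw [div_le_iff₀ hwp]; linarith
  have ht2 : 2 * (K * (n : ℝ) ^ (1 / 2 + 1 / 4 : ℝ)) * (‖w‖ / w.re) * ((n + 1 : ℕ) : ℝ) ^ (-w.re) ≤ 6 * K := by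
    calc _ = 2 * K * (‖w‖ / w.re) * ((n : ℝ) ^ (1 / 2 + 1 / 4 : ℝ) * ((n + 1 : ℕ) : ℝ) ^ (-w.re)) := by ring
      _ ≤ 2 * K * 3 * 1 := by gcongr
      _ = _ := by ring
  have hh : ‖∑ m ∈ (Finset.Icc 1 n).filter Odd, (m : ℂ) ^ (-w) * ((jacobiSym (m : ℤ) n : ℤ) : ℂ)‖ ≤ (n : ℝ) ^ δ / δ := by
    refine (norm_sum_le _ _).trans (le_trans ?_ (sum_rpow_le δ hδ (by linarith) n))
    refine le_trans (Finset.sum_le_sum (fun m hm => ?_))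
      (Finset.sum_le_sum_of_subset_of_nonneg (Finset.filter_subset Odd _) (fun i _ _ => by positivity))
    rw [Finset.mem_filter, Finset.mem_Icc] at hm
    have hm1 : (1 : ℝ) ≤ m := by exact_mod_cast hm.1.1
    rw [norm_mul, Complex.norm_natCast_cpow_of_pos (by omega), Complex.neg_re]
    have hj : ‖((jacobiSym (m : ℤ) n : ℤ) : ℂ)‖ ≤ 1 := by
      rcases jacobiSym.trichotomy (m : ℤ) n with h | h | h <;> rw [h] <;> simp
    calc _ ≤ (m : ℝ) ^ (-w.re) * 1 := by gcongr
      _ ≤ _ := by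
        rw [mul_one]
        exact Real.rpow_le_rpow_of_exponent_le hm1 (by linarith)
  set H := ∑ m ∈ (Finset.Icc 1 n).filter Odd, (m : ℂ) ^ (-w) * ((jacobiSym (m : ℤ) n : ℤ) : ℂ)
  have h3 := norm_add_le (Lval ξ w n - H) H
  rw [sub_add_cancel] at h3
  have h4 : 6 * K ≤ 6 * K * (n : ℝ) ^ δ := le_mul_of_one_le_right (by positivity) hδn
  have h5 : (6 * K + 1 / δ) * (n : ℝ) ^ δ = 6 * K * (n : ℝ) ^ δ + (n : ℝ) ^ δ / δ := by ring
  linarith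

/-- the limit term. -/
def lim_tm (s : ℂ) (n : ℕ) : ℂ :=
  if Odd n ∧ IsSquare n then
    (∏ p ∈ (4 * n).primeFactors, (1 - (p : ℂ) ^ (-1 : ℂ))) * aF (2 * 1) (4 * n) * (n : ℂ) ^ (-s) else 0

lemma cont_local (p : ℕ) (hp : p.Prime) (c : ℂ) : ContinuousAt (fun w : ℂ => 1 - (p : ℂ) ^ (-(c * w))) 1 := by
  have : (p : ℂ) ≠ 0 := by exact_mod_cast hp.ne_zero
  have h : Continuous (fun w : ℂ => (p : ℂ) ^ (-(c * w))) :=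
    Continuous.const_cpow (by fun_prop) (Or.inl this)
  exact (continuous_const.sub h).continuousAt

lemma aF_cont (m : ℕ) : ContinuousAt (fun w : ℂ => aF (2 * w) m) 1 := by
  unfold aF
  refine tendsto_finsetProd _ (fun p hp => ?_)
  have hp' := Nat.prime_of_mem_primeFactors hp
  refine (cont_local p hp' 2).inv₀ ?_
  intro h
  have h2 : ‖(p : ℂ) ^ (-((2 : ℂ) * 1))‖ < 1 := by
    rw [Complex.norm_natCast_cpow_of_pos hp'.pos]
    apply Real.rpow_lt_one_of_one_lt_of_neg
    · exact_mod_cast hp'.one_lt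
    · norm_num
  rw [← sub_eq_zero.1 h, norm_one] at h2
  exact lt_irrefl _ h2

lemma chi8_sq (n : ℕ) (hn : Odd n) (hsq : IsSquare n) : ((ZMod.χ₈ (n : ZMod 8) : ℤ) : ℂ) = 1 := by
  obtain ⟨k, rfl⟩ := hsq
  have hk : k % 2 = 1 := by
    rcases Nat.even_or_odd k with h | h
    · exact absurd hn (by rw [Nat.not_odd_iff_even]; exact h.mul_left k)
    · exact Nat.odd_iff.1 h
  rw [ZMod.χ₈_nat_eq_if_mod_eight]
  have : k * k % 8 = 1 := by
    rw [Nat.mul_mod]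
    have : k % 8 = 1 ∨ k % 8 = 3 ∨ k % 8 = 5 ∨ k % 8 = 7 := by omega
    rcases this with h | h | h | h <;> rw [h]
  have h2 : k * k % 2 = 1 := by omega
  simp [this, h2]

lemma pointwise (ξ : (n : ℕ) → DirichletCharacter ℂ (4 * n)) (hξ : ∀ n, Odd n → JX n (ξ n))
    (s : ℂ) (n : ℕ) :
    Tendsto (fun w : ℂ => (w - 1) * tm ξ s w n) (𝓝[≠] 1) (𝓝 (lim_tm s n)) := by
  by_cases hn : Odd n
  swap
  · have : ∀ w, (w - 1) * tm ξ s w n = 0 := by intro w; rw [tm, dif_neg hn, mul_zero]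
    simp only [this]
    rw [lim_tm, if_neg (fun h => hn h.1)]
    exact tendsto_const_nhds
  have hnz : NeZero (4 * n) := ⟨by have := hn.pos; omega⟩
  have haF : Tendsto (fun w : ℂ => aF (2 * w) (4 * n)) (𝓝[≠] 1) (𝓝 (aF (2 * 1) (4 * n))) :=
    (aF_cont (4 * n)).tendsto.mono_left nhdsWithin_le_nhds
  by_cases hsq : IsSquare n
  · rw [lim_tm, if_pos ⟨hn, hsq⟩]
    have h1 : Tendsto (fun w : ℂ => ∏ p ∈ (4 * n).primeFactors, (1 - (p : ℂ) ^ (-w))) (𝓝[≠] 1)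
        (𝓝 (∏ p ∈ (4 * n).primeFactors, (1 - (p : ℂ) ^ (-1 : ℂ)))) := by
      refine tendsto_finsetProd _ (fun p hp => ?_)
      have := (cont_local p (Nat.prime_of_mem_primeFactors hp) 1).tendsto.mono_left (nhdsWithin_le_nhds (s := {1}ᶜ))
      simpa using this
    have h2 := ((riemannZeta_residue_one.mul h1).mul haF).mul_const ((n : ℂ) ^ (-s))
    rw [one_mul] at h2
    refine h2.congr' ?_
    filter_upwards [self_mem_nhdsWithin] with w hw
    rw [tm_eq, Lval_sq ξ hξ n hn hsq w hw, chi8_sq n hn hsq]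
    ring
  · rw [lim_tm, if_neg (fun h => hsq h.2)]
    have hc : Continuous (ξ n).LFunction :=
      (DirichletCharacter.differentiable_LFunction ((hξ n hn).ne_one hn hsq)).continuous
    have hL : Tendsto (fun w : ℂ => Lval ξ w n) (𝓝[≠] 1) (𝓝 ((ξ n).LFunction 1)) := by
      have : (fun w : ℂ => Lval ξ w n) = (ξ n).LFunction := by
        funext w; rw [Lval, dif_pos hn]
      rw [this]
      exact (hc.tendsto 1).mono_left nhdsWithin_le_nhds
    have hw1 : Tendsto (fun w : ℂ => w - 1) (𝓝[≠] 1) (𝓝 0) := by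
      have : Tendsto (fun w : ℂ => w - 1) (𝓝 1) (𝓝 (1 - 1)) := tendsto_id.sub_const 1
      rw [sub_self] at this
      exact this.mono_left nhdsWithin_le_nhds
    have := hw1.mul (((hL.const_mul ((ZMod.χ₈ (n : ZMod 8) : ℤ) : ℂ)).mul haF).mul_const ((n : ℂ) ^ (-s)))
    rw [zero_mul] at this
    refine this.congr fun w => ?_
    rw [tm_eq]

lemma part_two (ξ : (n : ℕ) → DirichletCharacter ℂ (4 * n)) (hξ : ∀ n, Odd n → JX n (ξ n))
    (s : ℂ) (hs : 1 < s.re) :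
    Tendsto (fun w : ℂ => (w - 1) * ∑' n, tm ξ s w n) (𝓝[≠] 1) (𝓝 (∑' n, lim_tm s n)) := by
  obtain ⟨A, hA0, hA⟩ := aF_bound
  obtain ⟨δ, hδ0, hδ1, hδ2⟩ : ∃ δ : ℝ, 0 < δ ∧ δ ≤ 1 / 8 ∧ δ < s.re - 1 := by
    refine ⟨min (1 / 8) ((s.re - 1) / 2), lt_min (by norm_num) (by linarith), min_le_left _ _, ?_⟩
    have := min_le_right (1 / 8) ((s.re - 1) / 2)
    linarith
  obtain ⟨C, hC0, hC⟩ := Lval_near ξ hξ δ hδ0 hδ1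
  have hz : Summable (fun n : ℕ => C * (n : ℝ) ^ (δ - s.re)) := by
    apply Summable.mul_left
    rw [Real.summable_nat_rpow]; linarith
  have h2 := (sq_weight_summable s.re hs).mul_left 2
  simp_rw [← tsum_mul_left]
  refine tendsto_tsum_of_dominated_convergence ((hz.add h2).mul_left A) (pointwise ξ hξ s) ?_
  have ev1 : ∀ᶠ w : ℂ in 𝓝[≠] 1, ‖w - 1‖ < δ := by
    have : Metric.ball (1 : ℂ) δ ∈ 𝓝 (1 : ℂ) := Metric.ball_mem_nhds _ hδ0
    filter_upwards [nhdsWithin_le_nhds this] with w hw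
    rwa [Metric.mem_ball, dist_eq_norm] at hw
  have ev2 : ∀ᶠ w : ℂ in 𝓝[≠] 1, ‖(w - 1) * riemannZeta w‖ < 2 := by
    have := riemannZeta_residue_one.norm
    rw [norm_one] at this
    exact this.eventually_lt_const (by norm_num)
  filter_upwards [ev1, ev2, self_mem_nhdsWithin] with w hw1 hw2 hw3 n
  have hre : 1 - δ ≤ w.re := by
    have := Complex.abs_re_le_norm (w - 1)
    rw [Complex.sub_re, Complex.one_re] at this
    have := neg_abs_le (w.re - 1)
    linarith
  rw [norm_mul]
  have h3 := tm_norm_le A hA0 hA ξ s w (by linarith) n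
  calc ‖w - 1‖ * ‖tm ξ s w n‖ ≤ ‖w - 1‖ * (A * (‖Lval ξ w n‖ * (n : ℝ) ^ (-s.re))) := by gcongr
    _ = A * (‖w - 1‖ * ‖Lval ξ w n‖ * (n : ℝ) ^ (-s.re)) := by ring
    _ ≤ _ := by
      gcongr
      have hpos : 0 ≤ C * (n : ℝ) ^ (δ - s.re) := by positivity
      split_ifs with hsq
      · have h4 := Lval_sq_bound ξ hξ n hsq w hw3 (by linarith)
        have h5 : ‖w - 1‖ * ‖Lval ξ w n‖ ≤ 2 * (2 * √(n : ℝ)) := by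
          calc _ ≤ ‖w - 1‖ * (2 * √(n : ℝ) * ‖riemannZeta w‖) := by gcongr
            _ = ‖(w - 1) * riemannZeta w‖ * (2 * √(n : ℝ)) := by rw [norm_mul]; ring
            _ ≤ _ := by gcongr
        have h6 : ‖w - 1‖ * ‖Lval ξ w n‖ * (n : ℝ) ^ (-s.re) ≤ 2 * (2 * √(n : ℝ)) * (n : ℝ) ^ (-s.re) := by gcongr
        linarith
      · have h4 := hC n hsq w hw1
        have hn0 : 0 < n := by
          rcases Nat.eq_zero_or_pos n with rfl | h
          · exact absurd ⟨0, rfl⟩ hsq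
          · exact h
        have hn0' : (0 : ℝ) < n := by exact_mod_cast hn0
        rw [mul_zero, add_zero, sub_eq_add_neg δ, Real.rpow_add hn0', ← mul_assoc]
        refine mul_le_mul_of_nonneg_right ?_ (by positivity)
        have h7 : ‖w - 1‖ * ‖Lval ξ w n‖ ≤ 1 * ‖Lval ξ w n‖ :=
          mul_le_mul_of_nonneg_right (by linarith) (norm_nonneg _)
        rw [one_mul] at h7
        exact h7.trans h4

/-- the multiplicative coefficient. -/
def fE (s : ℂ) (k : ℕ) : ℂ :=
  if Odd k then (∏ p ∈ k.primeFactors, (1 + (p : ℂ)⁻¹)⁻¹) * (k : ℂ) ^ (-(2 * s)) else 0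

lemma local_identity (p : ℕ) (hp : 2 ≤ p) :
    (1 - (p : ℂ) ^ (-1 : ℂ)) * (1 - (p : ℂ) ^ (-(2 * 1 : ℂ)))⁻¹ = (1 + (p : ℂ)⁻¹)⁻¹ := by
  have hp0 : (p : ℂ) ≠ 0 := by exact_mod_cast (by omega : p ≠ 0)
  have h1 : (p : ℂ) - 1 ≠ 0 := by
    rw [sub_ne_zero]; exact_mod_cast (by omega : p ≠ 1)
  have h2 : (p : ℂ) + 1 ≠ 0 := by exact_mod_cast (by omega : p + 1 ≠ 0)
  have e1 : (p : ℂ) ^ (-(2 * 1 : ℂ)) = ((p : ℂ) ^ 2)⁻¹ := by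
    rw [Complex.cpow_neg, mul_one]
    norm_cast
  rw [Complex.cpow_neg_one, e1]
  have e2 : (1 - ((p : ℂ) ^ 2)⁻¹) = (1 - (p : ℂ)⁻¹) * (1 + (p : ℂ)⁻¹) := by ring
  have h3 : 1 - (p : ℂ)⁻¹ ≠ 0 := by
    have : 1 - (p : ℂ)⁻¹ = ((p : ℂ) - 1) / p := by field_simp
    rw [this]; exact div_ne_zero h1 hp0
  rw [e2, mul_inv, ← mul_assoc, mul_inv_cancel₀ h3, one_mul]

lemma lim_tm_sq (s : ℂ) (k : ℕ) : lim_tm s (k * k) = 2 / 3 * fE s k := by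
  by_cases hk : Odd k
  · have hk0 : k ≠ 0 := hk.pos.ne'
    rw [lim_tm, if_pos ⟨hk.mul hk, ⟨k, rfl⟩⟩, fE, if_pos hk, aF, ← Finset.prod_mul_distrib]
    have e : (4 * (k * k)).primeFactors = insert 2 k.primeFactors := by
      rw [show 4 * (k * k) = (2 * k) ^ 2 by ring, Nat.primeFactors_pow _ (by norm_num),
        Nat.primeFactors_mul (by norm_num) hk0, Nat.prime_two.primeFactors]
      rfl
    have h2 : 2 ∉ k.primeFactors := by
      intro h
      have := Nat.dvd_of_mem_primeFactors h
      obtain ⟨m, rfl⟩ := hk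
      omega
    have e3 : ∏ p ∈ (4 * (k * k)).primeFactors, ((1 - (p : ℂ) ^ (-1 : ℂ)) * (1 - (p : ℂ) ^ (-(2 * 1 : ℂ)))⁻¹)
        = ∏ p ∈ (4 * (k * k)).primeFactors, (1 + (p : ℂ)⁻¹)⁻¹ :=
      Finset.prod_congr rfl fun p hp => local_identity p (Nat.prime_of_mem_primeFactors hp).two_le
    rw [e3, e, Finset.prod_insert h2]
    have e4 : ((k * k : ℕ) : ℂ) ^ (-s) = (k : ℂ) ^ (-(2 * s)) := by
      have hk1 : (k : ℂ) ≠ 0 := by exact_mod_cast hk0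
      push_cast
      rw [Complex.natCast_mul_natCast_cpow, ← Complex.cpow_add _ _ hk1]
      ring_nf
    rw [e4]
    push_cast
    norm_num
    ring
  · rw [lim_tm, if_neg, fE, if_neg hk, mul_zero]
    rintro ⟨h, -⟩
    exact hk (Nat.odd_mul.1 h).1

lemma tsum_lim (s : ℂ) : ∑' n, lim_tm s n = 2 / 3 * ∑' k, fE s k := by
  have hinj : Function.Injective (fun k : ℕ => k * k) := fun a b h => by
    have : a ^ 2 = b ^ 2 := by simpa [sq] using h
    exact Nat.pow_left_injective (by norm_num : (2:ℕ) ≠ 0) this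
  rw [← tsum_mul_left, ← hinj.tsum_eq (f := lim_tm s)]
  · exact tsum_congr fun k => lim_tm_sq s k
  · intro n hn
    rw [Function.mem_support, lim_tm] at hn
    by_cases h : Odd n ∧ IsSquare n
    · obtain ⟨k, hk⟩ := h.2
      exact ⟨k, hk.symm⟩
    · rw [if_neg h] at hn; exact absurd rfl hn

lemma fE_one (s : ℂ) : fE s 1 = 1 := by simp [fE]

lemma fE_mul (s : ℂ) {m n : ℕ} (h : m.Coprime n) : fE s (m * n) = fE s m * fE s n := by
  by_cases hm : Odd m
  · by_cases hn : Odd n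
    · rw [fE, fE, fE, if_pos hm, if_pos hn, if_pos (hm.mul hn), h.primeFactors_mul,
        Finset.prod_union h.disjoint_primeFactors]
      push_cast
      rw [Complex.natCast_mul_natCast_cpow]
      ring
    · rw [fE, if_neg (fun h => hn (Nat.odd_mul.1 h).2), fE, fE, if_neg hn, mul_zero]
  · rw [fE, if_neg (fun h => hm (Nat.odd_mul.1 h).1), fE, if_neg hm, zero_mul]

lemma c_norm (p : ℕ) : ‖(1 + (p : ℂ)⁻¹)⁻¹‖ ≤ 1 := by
  have : (1 + (p : ℂ)⁻¹) = ((1 + (p : ℝ)⁻¹ : ℝ) : ℂ) := by push_cast; rfl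
  rw [norm_inv, this, Complex.norm_real]
  apply inv_le_one_of_one_le₀
  rw [Real.norm_of_nonneg (by positivity)]
  have : (0 : ℝ) ≤ (p : ℝ)⁻¹ := by positivity
  linarith

lemma fE_summable (s : ℂ) (hs : 1 < s.re) : Summable (fun k => ‖fE s k‖) := by
  have : Summable (fun k : ℕ => (k : ℝ) ^ (-(2 * s.re))) := by
    rw [Real.summable_nat_rpow]; linarith
  refine Summable.of_nonneg_of_le (fun k => norm_nonneg _) (fun k => ?_) this
  by_cases hk : Odd k
  · rw [fE, if_pos hk, norm_mul, Complex.norm_natCast_cpow_of_pos hk.pos, norm_prod]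
    have h1 : ∏ p ∈ k.primeFactors, ‖(1 + (p : ℂ)⁻¹)⁻¹‖ ≤ 1 :=
      Finset.prod_le_one (fun _ _ => norm_nonneg _) (fun p _ => c_norm p)
    have h2 : (-(2 * s)).re = -(2 * s.re) := by simp
    rw [h2]
    exact mul_le_of_le_one_left (by positivity) h1
  · rw [fE, if_neg hk, norm_zero]; positivity

lemma fE_local (s : ℂ) (hs : 1 < s.re) (p : ℕ) (hp : p.Prime) :
    ∑' e : ℕ, fE s (p ^ e) = (1 - (p : ℂ) ^ (-(2 * s)))⁻¹ *
      ((if p = 2 then 1 - (2 : ℂ) ^ (-2 * s) else 1) *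
       (if p = 2 then 1 else 1 - 1 / ((p : ℂ) ^ (2 * s) * ((p : ℕ) + 1)))) := by
  have hp0 : (p : ℂ) ≠ 0 := by exact_mod_cast hp.ne_zero
  have hx : ‖(p : ℂ) ^ (-(2 * s))‖ < 1 := by
    rw [Complex.norm_natCast_cpow_of_pos hp.pos]
    apply Real.rpow_lt_one_of_one_lt_of_neg
    · exact_mod_cast hp.one_lt
    · simp; linarith
  have hx1 : 1 - (p : ℂ) ^ (-(2 * s)) ≠ 0 := by
    intro h
    rw [← sub_eq_zero.1 h, norm_one] at hx
    exact lt_irrefl _ hx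
  by_cases h2 : p = 2
  · subst h2
    rw [if_pos rfl, if_pos rfl, tsum_eq_single 0]
    · rw [pow_zero, fE_one, mul_one]
      push_cast at hx1 ⊢
      rw [neg_mul, inv_mul_cancel₀ hx1]
    · intro e he
      rw [fE, if_neg]
      rw [Nat.not_odd_iff_even]
      exact (Nat.even_pow.2 ⟨even_two, he⟩)
  · rw [if_neg h2, if_neg h2]
    have hodd := hp.odd_of_ne_two h2
    have hg := (hasSum_geometric_of_norm_lt_one hx).mul_left ((1 + (p : ℂ)⁻¹)⁻¹ * (p : ℂ) ^ (-(2 * s)))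
    have hstep : ∀ e : ℕ, fE s (p ^ (e + 1)) = (1 + (p : ℂ)⁻¹)⁻¹ * (p : ℂ) ^ (-(2 * s)) * ((p : ℂ) ^ (-(2 * s))) ^ e := by
      intro e
      rw [fE, if_pos hodd.pow, Nat.primeFactors_prime_pow (by omega) hp, Finset.prod_singleton, mul_assoc, ← pow_succ']
      congr 1
      push_cast
      rw [← Complex.natCast_cpow_natCast_mul, Complex.cpow_nat_mul]
    have h3 : HasSum (fun e => fE s (p ^ (e + 1))) ((1 + (p : ℂ)⁻¹)⁻¹ * (p : ℂ) ^ (-(2 * s)) * (1 - (p : ℂ) ^ (-(2 * s)))⁻¹) := by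
      simp_rw [hstep]; exact hg
    have h4 := HasSum.zero_add (f := fun e => fE s (p ^ e)) h3
    rw [h4.tsum_eq, pow_zero, fE_one]
    have h5 : (p : ℂ) + 1 ≠ 0 := by exact_mod_cast (by omega : p + 1 ≠ 0)
    have h6 : (p : ℂ) ^ (2 * s) = ((p : ℂ) ^ (-(2 * s)))⁻¹ := by rw [Complex.cpow_neg, inv_inv]
    have h7 : (p : ℂ) ^ (-(2 * s)) ≠ 0 := by
      rw [Complex.cpow_ne_zero_iff_of_exponent_ne_zero]
      · exact hp0
      · intro h
        have := congrArg Complex.re h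
        simp at this
        linarith
    rw [h6]
    set x := (p : ℂ) ^ (-(2 * s))
    have h8 : (1 + (p : ℂ)⁻¹)⁻¹ = p / (p + 1) := by field_simp
    rw [h8]
    field_simp
    ring

lemma eval (s : ℂ) (hs : 1 < s.re) : ∑' k, fE s k = riemannZeta (2 * s) * ((1 - (2 : ℂ) ^ (-2 * s)) *
    ∏' p : {p : ℕ // p.Prime ∧ 2 < p}, (1 - 1 / ((p : ℂ) ^ (2 * s) * ((p : ℕ) + 1)))) := by
  have h1 := EulerProduct.eulerProduct_hasProd (fE_one s) (fE_mul s) (fE_summable s hs) (by simp [fE])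
  have h2 := riemannZeta_eulerProduct_hasProd (s := 2 * s) (by simp; linarith)
  have h3 : HasProd (fun p : Nat.Primes => if (p : ℕ) = 2 then 1 - (2 : ℂ) ^ (-2 * s) else 1) (1 - (2 : ℂ) ^ (-2 * s)) := by
    have := hasProd_single (f := fun p : Nat.Primes => if (p : ℕ) = 2 then 1 - (2 : ℂ) ^ (-2 * s) else 1)
      (⟨2, Nat.prime_two⟩ : Nat.Primes) (by
        intro b hb
        rw [if_neg]
        intro h
        exact hb (Subtype.ext h))
    simpa using this
  have h4 : HasProd (fun p : Nat.Primes => if (p : ℕ) = 2 then 1 else 1 - 1 / (((p : ℕ) : ℂ) ^ (2 * s) * ((p : ℕ) + 1)))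
      (∏' p : {p : ℕ // p.Prime ∧ 2 < p}, (1 - 1 / ((p : ℂ) ^ (2 * s) * ((p : ℕ) + 1)))) := by
    let ι : {p : ℕ // p.Prime ∧ 2 < p} → Nat.Primes := fun q => ⟨q.1, q.2.1⟩
    have hinj : Function.Injective ι := by
      intro a b h
      exact Subtype.ext (congrArg (fun x : Nat.Primes => (x : ℕ)) h)
    refine (hinj.hasProd_iff ?_).1 ?_
    rotate_left
    · have hm : Multipliable (fun p : {p : ℕ // p.Prime ∧ 2 < p} => (1 - 1 / ((p : ℂ) ^ (2 * s) * ((p : ℕ) + 1)))) := by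
        have hz : Summable (fun k : ℕ => (k : ℝ) ^ (-(2 * s.re))) := by
          rw [Real.summable_nat_rpow]; linarith
        have hz2 := hz.comp_injective (Subtype.val_injective (p := fun p : ℕ => p.Prime ∧ 2 < p))
        simp only [sub_eq_add_neg]
        apply multipliable_one_add_of_summable
        refine Summable.of_nonneg_of_le (fun k => norm_nonneg _) (fun k => ?_) hz2
        have hk : 0 < (k : ℕ) := k.2.1.pos
        have hk' : (0 : ℝ) < ((k : ℕ) : ℝ) := by exact_mod_cast hk
        have e5 : ‖(((k : ℕ) : ℂ)) + 1‖ = ((k : ℕ) : ℝ) + 1 := by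
          have : (((k : ℕ) : ℂ)) + 1 = ((((k : ℕ) : ℝ) + 1 : ℝ) : ℂ) := by push_cast; rfl
          rw [this, Complex.norm_real, Real.norm_of_nonneg (by positivity)]
        rw [norm_neg, norm_div, norm_one, norm_mul, Complex.norm_natCast_cpow_of_pos hk, e5]
        simp only [Function.comp]
        rw [Real.rpow_neg hk'.le, ← one_div]
        have e6 : (2 * s).re = 2 * s.re := by simp
        rw [e6]
        apply one_div_le_one_div_of_le (by positivity)
        exact le_mul_of_one_le_right (by positivity) (by linarith)
      convert hm.hasProd using 1
      funext q
      exact if_neg (show ¬ (q : ℕ) = 2 by have := q.2.2; omega)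
    · intro x hx
      rw [if_pos]
      by_contra h
      exact hx ⟨⟨x.1, x.2, lt_of_le_of_ne x.2.two_le (Ne.symm h)⟩, rfl⟩
  have h5 := h2.mul (h3.mul h4)
  have h6 : (fun p : Nat.Primes => ∑' e : ℕ, fE s ((p : ℕ) ^ e)) = _ :=
    funext fun p : Nat.Primes => fE_local s hs p p.2
  rw [h6] at h1
  exact HasProd.unique h1 h5

/-- the series `F(w) = Σ_{n odd} χ₈(n) L(w,(·/4n)) a_{2w}(4n) n^{-s}` converges
absolutely for `Re w > 3/4`, `w ≠ 1`, and `(w-1)F(w)` tends to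
`(2/3) ζ(2s) (1-2^{-2s}) ∏_{p>2}(1 - 1/(p^{2s}(p+1)))` as `w → 1` in that region. -/
theorem statement13
    (ξ : (n : ℕ) → DirichletCharacter ℂ (4 * n))
    (hξ : ∀ n : ℕ, Odd n →
      (∀ m : ℕ, Odd m → ξ n (m : ZMod (4 * n)) = ((jacobiSym (m : ℤ) n : ℤ) : ℂ)) ∧
      (∀ m : ℕ, Even m → ξ n (m : ZMod (4 * n)) = 0))
    (s : ℂ) (hs : 1 < s.re)
    (F : ℂ → ℂ)
    (hF : ∀ w : ℂ, F w = ∑' n : ℕ, if h : Odd n then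
        haveI : NeZero (4 * n) := ⟨by rcases h with ⟨k, rfl⟩; omega⟩
        ((ZMod.χ₈ (n : ZMod 8) : ℤ) : ℂ) * (ξ n).LFunction w * aF (2 * w) (4 * n) *
          (n : ℂ) ^ (-s) else 0) :
    (∀ w : ℂ, 3 / 4 < w.re → w ≠ 1 →
      Summable (fun n : ℕ => ‖(if h : Odd n then
        haveI : NeZero (4 * n) := ⟨by rcases h with ⟨k, rfl⟩; omega⟩
        ((ZMod.χ₈ (n : ZMod 8) : ℤ) : ℂ) * (ξ n).LFunction w * aF (2 * w) (4 * n) *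
          (n : ℂ) ^ (-s) else 0)‖)) ∧
    Tendsto (fun w : ℂ => (w - 1) * F w)
      (𝓝[{w : ℂ | 3 / 4 < w.re ∧ w ≠ 1}] 1)
      (𝓝 ((2 / 3) * riemannZeta (2 * s) * (1 - (2 : ℂ) ^ (-2 * s)) *
        ∏' p : {p : ℕ // p.Prime ∧ 2 < p}, (1 - 1 / ((p : ℂ) ^ (2 * s) * ((p : ℕ) + 1))))) := by
  have hξ' : ∀ n, Odd n → JX n (ξ n) := hξ
  refine ⟨fun w hw hw1 => part_one ξ hξ' s hs w hw hw1, ?_⟩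
  have h := part_two ξ hξ' s hs
  rw [tsum_lim, eval s hs] at h
  have h2 := h.mono_left (nhdsWithin_mono 1 (show {w : ℂ | 3 / 4 < w.re ∧ w ≠ 1} ⊆ {1}ᶜ from fun w hw => hw.2))
  have hF' : ∀ w, F w = ∑' n, tm ξ s w n := hF
  simp only [hF']
  convert h2 using 2
  ring
end
end

section
/- For every s ∈ ℂ with Re s > 1/2, the series and products below converge absolutely and Σ_{n odd ≥ 1} (∏_{p | n} p/(p+1)) · n^{−2s} = ζ(2s)·(1 − 2^{−2s}) · ∏_{p > 2 prime} (1 − 1/(p^{2s}(p+1))). -/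
open Complex

noncomputable def st14f (s : ℂ) (n : ℕ) : ℂ := if Odd n then
        (∏ p ∈ n.primeFactors, (p : ℂ) / ((p : ℂ) + 1)) * (n : ℂ) ^ (-(2 * s)) else 0

noncomputable def st14g (s : ℂ) (p : ℕ) : ℂ := 1 - 1 / ((p : ℂ) ^ (2 * s) * ((p : ℂ) + 1))

lemma st14_norm_pp (p : ℕ) : ‖((p : ℂ) + 1)‖ = (p : ℝ) + 1 := by
  have : ((p : ℂ) + 1) = ((p + 1 : ℕ) : ℂ) := by push_cast; rfl
  rw [this, Complex.norm_natCast]; push_cast; rfl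

lemma st14_norm_frac (p : ℕ) : ‖(p : ℂ) / ((p : ℂ) + 1)‖ ≤ 1 := by
  rw [norm_div, st14_norm_pp, Complex.norm_natCast, div_le_one (by positivity)]
  linarith

lemma st14_summ0 (s : ℂ) (hs : 1 / 2 < s.re) :
    Summable (fun n : ℕ => ‖(1 : ℂ) / (n : ℂ) ^ (2 * s)‖) := by
  have h := Complex.summable_one_div_nat_cpow (p := 2 * s)
  have h2 := h.mpr (by simp; linarith)
  exact h2.norm

lemma st14_summ (s : ℂ) (hs : 1 / 2 < s.re) : Summable (fun n : ℕ => ‖st14f s n‖) := by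
  refine Summable.of_nonneg_of_le (fun n => norm_nonneg _) (fun n => ?_) (st14_summ0 s hs)
  unfold st14f
  split_ifs
  · rw [norm_mul, cpow_neg, one_div, norm_prod]
    refine mul_le_of_le_one_left (norm_nonneg _) ?_
    exact Finset.prod_le_one (fun i _ => norm_nonneg _) (fun i _ => st14_norm_frac i)
  · simp

lemma st14_mul (s : ℂ) {m n : ℕ} (h : m.Coprime n) :
    st14f s (m * n) = st14f s m * st14f s n := by
  unfold st14f
  by_cases hm : Odd m <;> by_cases hn : Odd n <;> simp only [Nat.odd_mul, hm, hn, and_true,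
    and_false, if_true, if_false, mul_zero, zero_mul]
  rw [h.primeFactors_mul, Finset.prod_union h.disjoint_primeFactors, Nat.cast_mul,
    Complex.natCast_mul_natCast_cpow]
  ring

lemma st14_one (s : ℂ) : st14f s 1 = 1 := by simp [st14f]

lemma st14_zero (s : ℂ) : st14f s 0 = 0 := by simp [st14f]

lemma st14_lt (s : ℂ) (hs : 1 / 2 < s.re) {p : ℕ} (hp : p.Prime) :
    ‖(p : ℂ) ^ (-(2 * s))‖ < 1 := by
  rw [Complex.norm_natCast_cpow_of_pos hp.pos]
  apply Real.rpow_lt_one_of_one_lt_of_neg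
  · exact_mod_cast hp.one_lt
  · simp; linarith

lemma st14_local_odd (s : ℂ) (hs : 1 / 2 < s.re) {p : ℕ} (hp : p.Prime) (h2 : p ≠ 2) :
    ∑' e, st14f s (p ^ e) = st14g s p * (1 - (p : ℂ) ^ (-(2 * s)))⁻¹ := by
  have hlt := st14_lt s hs hp
  have hodd := hp.odd_of_ne_two h2
  have hx1 : (1 : ℂ) - (p : ℂ) ^ (-(2 * s)) ≠ 0 := by
    intro h
    rw [← sub_eq_zero.mp h] at hlt
    simp at hlt
  have hp1 : (p : ℂ) + 1 ≠ 0 := by exact_mod_cast Nat.succ_ne_zero p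
  have hf : ∀ e, st14f s (p ^ (e + 1)) =
      ((p : ℂ) / (p + 1) * (p : ℂ) ^ (-(2 * s))) * ((p : ℂ) ^ (-(2 * s))) ^ e := by
    intro e
    unfold st14f
    rw [if_pos hodd.pow, Nat.primeFactors_prime_pow (Nat.succ_ne_zero e) hp,
      Finset.prod_singleton, Nat.cast_pow, ← Complex.natCast_cpow_natCast_mul, mul_assoc,
      ← pow_succ', ← Complex.cpow_nat_mul]
  have hsum : HasSum (fun e => st14f s (p ^ (e + 1)))
      (((p : ℂ) / (p + 1) * (p : ℂ) ^ (-(2 * s))) * (1 - (p : ℂ) ^ (-(2 * s)))⁻¹) := by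
    simp_rw [hf]
    exact (hasSum_geometric_of_norm_lt_one hlt).mul_left _
  have hall := (hasSum_nat_add_iff (f := fun e => st14f s (p ^ e)) 1).mp hsum
  rw [hall.tsum_eq]
  simp only [Finset.sum_range_one, pow_zero, st14_one]
  unfold st14g
  rw [one_div, mul_inv, ← cpow_neg]
  field_simp
  ring

lemma st14_local_two (s : ℂ) : ∑' e, st14f s (2 ^ e) = 1 := by
  rw [tsum_eq_single 0]
  · simp [st14_one]
  · intro e he
    unfold st14f
    rw [if_neg]
    rw [Nat.not_odd_iff_even]
    exact (Nat.even_pow).mpr ⟨even_two, he⟩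

lemma st14_multip (s : ℂ) (hs : 1 / 2 < s.re) :
    Multipliable (fun p : {p : ℕ // p.Prime ∧ 2 < p} => st14g s p) := by
  have : Summable (fun p : {p : ℕ // p.Prime ∧ 2 < p} =>
      ‖-(1 / (((p : ℕ) : ℂ) ^ (2 * s) * (((p : ℕ) : ℂ) + 1)))‖) := by
    refine Summable.of_nonneg_of_le (fun n => norm_nonneg _) (fun p => ?_)
      ((st14_summ0 s hs).comp_injective Subtype.val_injective)
    simp only [Function.comp]
    rw [norm_neg, one_div, one_div, mul_inv, norm_mul]
    refine mul_le_of_le_one_right (norm_nonneg _) ?_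
    rw [norm_inv, st14_norm_pp]
    apply inv_le_one_of_one_le₀
    have : (0 : ℝ) ≤ (p : ℕ) := Nat.cast_nonneg _
    linarith
  have h := multipliable_one_add_of_summable this
  simpa only [st14g, sub_eq_add_neg] using h

/-- `Σ_{n odd} (∏_{p|n} p/(p+1)) n^{-2s} = ζ(2s)(1-2^{-2s}) ∏_{p>2}(1-1/(p^{2s}(p+1)))`
for `Re s > 1/2`, all series/products converging absolutely. -/
theorem statement14 (s : ℂ) (hs : 1 / 2 < s.re) :
    Summable (fun n : ℕ => ‖(if Odd n then
        (∏ p ∈ n.primeFactors, (p : ℂ) / ((p : ℂ) + 1)) * (n : ℂ) ^ (-(2 * s)) else 0)‖) ∧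
    Multipliable (fun p : {p : ℕ // p.Prime ∧ 2 < p} =>
        (1 - 1 / (((p : ℕ) : ℂ) ^ (2 * s) * (((p : ℕ) : ℂ) + 1)))) ∧
    (∑' n : ℕ, if Odd n then
        (∏ p ∈ n.primeFactors, (p : ℂ) / ((p : ℂ) + 1)) * (n : ℂ) ^ (-(2 * s)) else 0) =
      riemannZeta (2 * s) * (1 - (2 : ℂ) ^ (-(2 * s))) *
        ∏' p : {p : ℕ // p.Prime ∧ 2 < p},
          (1 - 1 / (((p : ℕ) : ℂ) ^ (2 * s) * (((p : ℕ) : ℂ) + 1))) := by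
  refine ⟨st14_summ s hs, st14_multip s hs, ?_⟩
  change ∑' n : ℕ, st14f s n = _ * ∏' p : {p : ℕ // p.Prime ∧ 2 < p}, st14g s p
  have hE := EulerProduct.eulerProduct_hasProd (st14_one s) (fun h => st14_mul s h)
    (st14_summ s hs) (st14_zero s)
  have hZ := riemannZeta_eulerProduct_hasProd (s := 2 * s) (by simp; linarith)
  let two : Nat.Primes := ⟨2, Nat.prime_two⟩
  have hT : HasProd (fun p : Nat.Primes => if p = two then 1 - (2 : ℂ) ^ (-(2 * s)) else 1)
      (1 - (2 : ℂ) ^ (-(2 * s))) := hasProd_ite_eq two _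
  let i : {p : ℕ // p.Prime ∧ 2 < p} → Nat.Primes := fun p => ⟨p.1, p.2.1⟩
  have hi : Function.Injective i := by
    intro a b h
    exact Subtype.ext (congrArg (fun q : Nat.Primes => (q : ℕ)) h)
  have hG : HasProd (fun p : Nat.Primes => if p = two then 1 else st14g s p)
      (∏' p : {p : ℕ // p.Prime ∧ 2 < p}, st14g s p) := by
    rw [← hi.hasProd_iff]
    · convert (st14_multip s hs).hasProd using 1
      funext p
      have : i p ≠ two := by
        intro h
        have := congrArg (fun q : Nat.Primes => (q : ℕ)) h
        have h3 := p.2.2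
        simp only [i, two] at this
        omega
      simp only [Function.comp, if_neg this]
      rfl
    · intro q hq
      rw [if_pos]
      by_contra hne
      apply hq
      refine ⟨⟨q.1, q.2, ?_⟩, rfl⟩
      have h2 := q.2.two_le
      rcases h2.lt_or_eq with h | h
      · exact h
      · exact absurd (Subtype.ext h.symm) hne
  refine hE.unique ?_
  convert (hZ.mul hT).mul hG using 1
  funext p
  by_cases hp : p = two
  · subst hp
    have hlt := st14_lt s hs Nat.prime_two
    have hx1 : (1 : ℂ) - (2 : ℂ) ^ (-(2 * s)) ≠ 0 := by
      intro h
      rw [Nat.cast_ofNat, ← sub_eq_zero.mp h] at hlt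
      simp at hlt
    rw [if_pos rfl, if_pos rfl, mul_one]
    simp only [two, st14_local_two, Nat.cast_ofNat]
    rw [inv_mul_cancel₀ hx1]
  · simp only [if_neg hp, mul_one]
    rw [st14_local_odd s hs p.2 (fun h => hp (Subtype.ext h)), mul_comm]
end

section
/- Let χ be a Dirichlet character (of any modulus) and let s, t ∈ ℂ with Re s > 1 and Re t > 1. Define E₁(s,t;χ) := ∏_{p prime} (1 + (χ(p)·p^s − χ(p)²·p^t + χ(p)²)/((p^{s+t}+χ(p))·(p^s+χ(p))·(p^t−1))) and recursively E_{N+1}(s,t;χ) := E_N(s,t;χ)·∏_{p prime}(1 + χ(p)·p^{−(s+(N+1)t)})^{−1} for N ≥ 1. Then for every N ≥ 1 all the products involved converge absolutely and ∏_{p prime} (1 + χ(p)/((p^s+χ(p))·(p^t−1))) = ( ∏_{j=1}^{N} L(s+jt, χ)/L(2s+2jt, χ²) ) · E_N(s,t;χ). -/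
open Complex

noncomputable section

/-- The Euler products `E_N(s,t;f)` (`f` the values of the character), defined by the recursion
`E₁` explicit and `E_{N+1} = E_N · ∏_p (1 + f(p) p^{-(s+(N+1)t)})⁻¹`. -/
def Erec (f : ℕ → ℂ) (s t : ℂ) : ℕ → ℂ
  | 0 => 1
  | 1 => ∏' p : Nat.Primes,
      (1 + (f p * ((p : ℕ) : ℂ) ^ s - (f p) ^ 2 * ((p : ℕ) : ℂ) ^ t + (f p) ^ 2) /
        ((((p : ℕ) : ℂ) ^ (s + t) + f p) * (((p : ℕ) : ℂ) ^ s + f p) * (((p : ℕ) : ℂ) ^ t - 1)))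
  | (N + 2) => Erec f s t (N + 1) *
      ∏' p : Nat.Primes, (1 + f p * ((p : ℕ) : ℂ) ^ (-(s + ((N : ℕ) + 2) * t)))⁻¹

lemma aux_norm_pow (p : Nat.Primes) (u : ℂ) : ‖((p : ℕ) : ℂ) ^ u‖ = ((p : ℕ) : ℝ) ^ u.re :=
  Complex.norm_natCast_cpow_of_pos p.prop.pos u

lemma aux_two_le (p : Nat.Primes) (u : ℂ) (hu : 1 < u.re) : 2 ≤ ‖((p : ℕ) : ℂ) ^ u‖ := by
  rw [aux_norm_pow]
  have h2 : (2 : ℝ) ≤ ((p : ℕ) : ℝ) := by exact_mod_cast p.prop.two_le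
  calc (2 : ℝ) ≤ ((p : ℕ) : ℝ) := h2
    _ = ((p : ℕ) : ℝ) ^ (1 : ℝ) := (Real.rpow_one _).symm
    _ ≤ _ := Real.rpow_le_rpow_of_exponent_le (by linarith) hu.le

lemma aux_summable (u : ℂ) (hu : 1 < u.re) :
    Summable (fun p : Nat.Primes => ‖((p : ℕ) : ℂ) ^ u‖⁻¹) := by
  have := (Nat.Primes.summable_rpow (r := -u.re)).2 (by linarith)
  refine this.congr fun p => ?_
  rw [aux_norm_pow, Real.rpow_neg (by positivity)]

lemma aux_mult {n : ℕ} (χ : DirichletCharacter ℂ n) (u : ℂ) (hu : 1 < u.re) (c : ℂ)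
    (hc : ‖c‖ ≤ 1) :
    Multipliable (fun p : Nat.Primes =>
      1 + c * (χ ((p : ℕ) : ZMod n) * ((p : ℕ) : ℂ) ^ (-u))) := by
  refine multipliable_one_add_of_summable ?_
  refine (aux_summable u hu).of_nonneg_of_le (fun _ => norm_nonneg _) fun p => ?_
  rw [norm_mul, norm_mul, Complex.cpow_neg, norm_inv]
  have h1 := χ.norm_le_one ((p : ℕ) : ZMod n)
  have h3 : ‖c‖ * ‖χ ((p : ℕ) : ZMod n)‖ ≤ 1 := mul_le_one₀ hc (norm_nonneg _) h1
  rw [← mul_assoc]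
  exact mul_le_of_le_one_left (by positivity) h3

lemma aux_norm_lt {n : ℕ} (χ : DirichletCharacter ℂ n) (u : ℂ) (hu : 1 < u.re)
    (p : Nat.Primes) : ‖χ ((p : ℕ) : ZMod n) * ((p : ℕ) : ℂ) ^ (-u)‖ < 1 := by
  rw [norm_mul, Complex.cpow_neg, norm_inv]
  have h1 := χ.norm_le_one ((p : ℕ) : ZMod n)
  have h2 := aux_two_le p u hu
  have h3 : ‖((p : ℕ) : ℂ) ^ u‖⁻¹ < 1 := inv_lt_one_of_one_lt₀ (by linarith)
  exact lt_of_le_of_lt (mul_le_of_le_one_left (by positivity) h1) h3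

lemma aux_ne {z : ℂ} (h : ‖z‖ < 1) : 1 - z ≠ 0 ∧ 1 + z ≠ 0 := by
  constructor
  · intro h0
    have : z = 1 := by linear_combination -h0
    simp [this] at h
  · intro h0
    have : z = -1 := by linear_combination h0
    simp [this] at h

lemma aux_L {n : ℕ} [NeZero n] (χ : DirichletCharacter ℂ n) (u : ℂ) (hu : 1 < u.re) :
    HasProd (fun p : Nat.Primes => (1 - χ ((p : ℕ) : ZMod n) * ((p : ℕ) : ℂ) ^ (-u))⁻¹)
      (χ.LFunction u) := by
  rw [DirichletCharacter.LFunction_eq_LSeries χ hu]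
  exact χ.LSeries_eulerProduct_hasProd hu

lemma aux_Linv {n : ℕ} [NeZero n] (χ : DirichletCharacter ℂ n) (u : ℂ) (hu : 1 < u.re) :
    HasProd (fun p : Nat.Primes => (1 - χ ((p : ℕ) : ZMod n) * ((p : ℕ) : ℂ) ^ (-u)))
      (χ.LFunction u)⁻¹ := by
  have h1 : Multipliable
      (fun p : Nat.Primes => (1 - χ ((p : ℕ) : ZMod n) * ((p : ℕ) : ℂ) ^ (-u))) := by
    refine (aux_mult χ u hu (-1) (by simp)).congr fun p => ?_
    ring
  have h2 := h1.hasProd.mul (aux_L χ u hu)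
  have h3 : (∏' p : Nat.Primes, (1 - χ ((p : ℕ) : ZMod n) * ((p : ℕ) : ℂ) ^ (-u)))
      * χ.LFunction u = 1 := by
    refine h2.unique ?_
    convert hasProd_one (α := ℂ) (β := Nat.Primes) using 2 with p
    exact mul_inv_cancel₀ (aux_ne (aux_norm_lt χ u hu p)).1
  rw [← eq_inv_of_mul_eq_one_left h3]
  exact h1.hasProd

lemma aux_sq {n : ℕ} (χ : DirichletCharacter ℂ n) (u : ℂ) (p : Nat.Primes) :
    (χ ^ 2) ((p : ℕ) : ZMod n) * ((p : ℕ) : ℂ) ^ (-(2 * u)) =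
      (χ ((p : ℕ) : ZMod n) * ((p : ℕ) : ℂ) ^ (-u)) ^ 2 := by
  rw [MulChar.pow_apply' _ two_ne_zero, mul_pow, ← Complex.cpow_nat_mul]
  congr 2
  push_cast
  ring

lemma aux_F {n : ℕ} [NeZero n] (χ : DirichletCharacter ℂ n) (u : ℂ) (hu : 1 < u.re) :
    HasProd (fun p : Nat.Primes => (1 + χ ((p : ℕ) : ZMod n) * ((p : ℕ) : ℂ) ^ (-u)))
      (χ.LFunction u / (χ ^ 2).LFunction (2 * u)) := by
  have hu2 : 1 < (2 * u).re := by simp; linarith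
  have h := (aux_L χ u hu).mul (aux_Linv (χ ^ 2) (2 * u) hu2)
  rw [div_eq_mul_inv]
  convert h using 2 with p
  rw [aux_sq]
  have := (aux_ne (aux_norm_lt χ u hu p)).1
  field_simp
  ring

lemma aux_Finv {n : ℕ} [NeZero n] (χ : DirichletCharacter ℂ n) (u : ℂ) (hu : 1 < u.re) :
    Multipliable
      (fun p : Nat.Primes => (1 + χ ((p : ℕ) : ZMod n) * ((p : ℕ) : ℂ) ^ (-u))⁻¹) := by
  have hu2 : 1 < (2 * u).re := by simp; linarith
  have h := ((aux_Linv χ u hu).mul (aux_L (χ ^ 2) (2 * u) hu2)).multipliable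
  refine h.congr fun p => ?_
  rw [aux_sq]
  have h1 := (aux_ne (aux_norm_lt χ u hu p)).1
  have h2 := (aux_ne (aux_norm_lt χ u hu p)).2
  generalize χ ((p : ℕ) : ZMod n) * ((p : ℕ) : ℂ) ^ (-u) = z at *
  rw [show 1 - z ^ 2 = (1 - z) * (1 + z) by ring, mul_inv, mul_inv_cancel_left₀ h1]

lemma aux_FF {n : ℕ} [NeZero n] (χ : DirichletCharacter ℂ n) (u : ℂ) (hu : 1 < u.re) :
    (χ.LFunction u / (χ ^ 2).LFunction (2 * u)) *
      (∏' p : Nat.Primes, (1 + χ ((p : ℕ) : ZMod n) * ((p : ℕ) : ℂ) ^ (-u))⁻¹) = 1 := by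
  refine ((aux_F χ u hu).mul (aux_Finv χ u hu).hasProd).unique ?_
  convert hasProd_one (α := ℂ) (β := Nat.Primes) using 2 with p
  exact mul_inv_cancel₀ (aux_ne (aux_norm_lt χ u hu p)).2

lemma aux_lower {x a : ℂ} (hx : 2 ≤ ‖x‖) (ha : ‖a‖ ≤ 1) : ‖x‖ / 2 ≤ ‖x + a‖ := by
  have := norm_sub_norm_le x (-a)
  rw [sub_neg_eq_add, norm_neg] at this
  linarith

lemma aux_G {n : ℕ} (χ : DirichletCharacter ℂ n) (s t : ℂ) (hs : 1 < s.re) (ht : 1 < t.re) :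
    Multipliable (fun p : Nat.Primes =>
      (1 + χ ((p : ℕ) : ZMod n) /
        ((((p : ℕ) : ℂ) ^ s + χ ((p : ℕ) : ZMod n)) * (((p : ℕ) : ℂ) ^ t - 1)))) := by
  refine multipliable_one_add_of_summable ?_
  refine ((aux_summable s hs).mul_left 2).of_nonneg_of_le (fun _ => norm_nonneg _) fun p => ?_
  have ha := χ.norm_le_one ((p : ℕ) : ZMod n)
  have hx := aux_two_le p s hs
  have hy := aux_two_le p t ht
  have h1 := aux_lower hx ha
  have h2 := aux_lower (a := -1) hy (by simp)
  rw [← sub_eq_add_neg] at h2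
  rw [norm_div, norm_mul, ← inv_inv (2 : ℝ), ← mul_inv, ← one_div]
  have h3 : (2 : ℝ)⁻¹ * ‖((p : ℕ) : ℂ) ^ s‖ ≤
      ‖((p : ℕ) : ℂ) ^ s + χ ((p : ℕ) : ZMod n)‖ * ‖((p : ℕ) : ℂ) ^ t - 1‖ := by
    nlinarith [norm_nonneg (((p : ℕ) : ℂ) ^ s + χ ((p : ℕ) : ZMod n))]
  gcongr

lemma aux_E {n : ℕ} (χ : DirichletCharacter ℂ n) (s t : ℂ) (hs : 1 < s.re) (ht : 1 < t.re)
    (p : Nat.Primes) :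
    (1 + χ ((p : ℕ) : ZMod n) /
        ((((p : ℕ) : ℂ) ^ s + χ ((p : ℕ) : ZMod n)) * (((p : ℕ) : ℂ) ^ t - 1))) *
      (1 + χ ((p : ℕ) : ZMod n) * ((p : ℕ) : ℂ) ^ (-(s + t)))⁻¹ =
      (1 + (χ ((p : ℕ) : ZMod n) * ((p : ℕ) : ℂ) ^ s
            - (χ ((p : ℕ) : ZMod n)) ^ 2 * ((p : ℕ) : ℂ) ^ t + (χ ((p : ℕ) : ZMod n)) ^ 2) /
        ((((p : ℕ) : ℂ) ^ (s + t) + χ ((p : ℕ) : ZMod n)) *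
          (((p : ℕ) : ℂ) ^ s + χ ((p : ℕ) : ZMod n)) * (((p : ℕ) : ℂ) ^ t - 1))) := by
  have hst : 1 < (s + t).re := by rw [add_re]; linarith
  have ha := χ.norm_le_one ((p : ℕ) : ZMod n)
  have hx := aux_two_le p s hs
  have hy := aux_two_le p t ht
  have hxy := aux_two_le p (s + t) hst
  have h1 := aux_lower hx ha
  have h2 := aux_lower (a := -1) hy (by simp)
  have h3 := aux_lower hxy ha
  rw [← sub_eq_add_neg] at h2
  have hp : ((p : ℕ) : ℂ) ≠ 0 := by exact_mod_cast p.prop.ne_zero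
  rw [Complex.cpow_neg]
  rw [Complex.cpow_add _ _ hp] at *
  generalize ((p : ℕ) : ℂ) ^ s = x at *
  generalize ((p : ℕ) : ℂ) ^ t = y at *
  generalize χ ((p : ℕ) : ZMod n) = a at *
  have e1 : x + a ≠ 0 := norm_pos_iff.1 (by linarith)
  have e2 : y - 1 ≠ 0 := norm_pos_iff.1 (by linarith)
  have e3 : x * y + a ≠ 0 := norm_pos_iff.1 (by linarith)
  have e4 : x * y ≠ 0 := norm_pos_iff.1 (by linarith)
  have e5 : 1 + a * (x * y)⁻¹ = (x * y + a) / (x * y) := by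
    rw [add_div, div_self e4, div_eq_mul_inv]
  rw [e5, inv_div]
  rw [one_add_div (mul_ne_zero e1 e2), one_add_div (mul_ne_zero (mul_ne_zero e3 e1) e2),
    div_mul_div_comm, div_eq_div_iff (mul_ne_zero (mul_ne_zero e1 e2) e3)
      (mul_ne_zero (mul_ne_zero e3 e1) e2)]
  ring

/-- the Euler-product identity
`∏_p (1 + χ(p)/((p^s+χ(p))(p^t-1))) = ∏_{j=1}^N L(s+jt,χ)/L(2s+2jt,χ²) · E_N(s,t;χ)`
for `Re s > 1`, `Re t > 1`, all products converging absolutely. -/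
theorem statement16
    (n : ℕ) (hn : NeZero n) (χ : DirichletCharacter ℂ n)
    (s t : ℂ) (hs : 1 < s.re) (ht : 1 < t.re) (N : ℕ) (hN : 1 ≤ N) :
    Multipliable (fun p : Nat.Primes =>
      (1 + χ ((p : ℕ) : ZMod n) /
        ((((p : ℕ) : ℂ) ^ s + χ ((p : ℕ) : ZMod n)) * (((p : ℕ) : ℂ) ^ t - 1)))) ∧
    Multipliable (fun p : Nat.Primes =>
      (1 + (χ ((p : ℕ) : ZMod n) * ((p : ℕ) : ℂ) ^ s
            - (χ ((p : ℕ) : ZMod n)) ^ 2 * ((p : ℕ) : ℂ) ^ t + (χ ((p : ℕ) : ZMod n)) ^ 2) /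
        ((((p : ℕ) : ℂ) ^ (s + t) + χ ((p : ℕ) : ZMod n)) *
          (((p : ℕ) : ℂ) ^ s + χ ((p : ℕ) : ZMod n)) * (((p : ℕ) : ℂ) ^ t - 1)))) ∧
    (∀ M : ℕ, 2 ≤ M → M ≤ N → Multipliable (fun p : Nat.Primes =>
      (1 + χ ((p : ℕ) : ZMod n) * ((p : ℕ) : ℂ) ^ (-(s + (M : ℂ) * t)))⁻¹)) ∧
    (∏' p : Nat.Primes,
      (1 + χ ((p : ℕ) : ZMod n) /
        ((((p : ℕ) : ℂ) ^ s + χ ((p : ℕ) : ZMod n)) * (((p : ℕ) : ℂ) ^ t - 1)))) =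
      (∏ j ∈ Finset.Icc 1 N,
        χ.LFunction (s + (j : ℂ) * t) / (χ ^ 2).LFunction (2 * s + 2 * (j : ℂ) * t)) *
      Erec (fun m => χ (m : ZMod n)) s t N := by
  have := hn
  have hre : ∀ j : ℕ, 1 < (s + (j : ℂ) * t).re := by
    intro j
    have : (s + (j : ℂ) * t).re = s.re + j * t.re := by simp
    rw [this]
    have : 0 ≤ (j : ℝ) * t.re := by positivity
    linarith
  have hst : 1 < (s + t).re := by rw [add_re]; linarith
  have hG := aux_G χ s t hs ht
  have hE := (hG.mul (aux_Finv χ (s + t) hst)).congr (aux_E χ s t hs ht)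
  refine ⟨hG, hE, fun M _ _ => aux_Finv χ _ (hre M), ?_⟩
  induction N, hN using Nat.le_induction with
  | base =>
    have h1 := hG.tprod_mul (aux_Finv χ (s + t) hst)
    rw [tprod_congr (aux_E χ s t hs ht)] at h1
    have h2 := aux_FF χ (s + t) hst
    simp only [Finset.Icc_self, Finset.prod_singleton, Erec, Nat.cast_one, one_mul, mul_one]
    rw [h1, ← mul_add]
    linear_combination (-1 : ℂ) * (∏' p : Nat.Primes,
      (1 + χ ((p : ℕ) : ZMod n) /
        ((((p : ℕ) : ℂ) ^ s + χ ((p : ℕ) : ZMod n)) * (((p : ℕ) : ℂ) ^ t - 1)))) * h2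
  | succ N hN ih =>
    obtain ⟨k, rfl⟩ : ∃ k, N = k + 1 := ⟨N - 1, by omega⟩
    rw [ih, Finset.prod_Icc_succ_top (b := k + 1) (by omega)]
    have h2 := aux_FF χ _ (hre (k + 1 + 1))
    have e : (2 * s + 2 * ((k + 1 + 1 : ℕ) : ℂ) * t) = 2 * (s + ((k + 1 + 1 : ℕ) : ℂ) * t) := by
      ring
    have e2 : Erec (fun m => χ (m : ZMod n)) s t (k + 1 + 1) =
        Erec (fun m => χ (m : ZMod n)) s t (k + 1) *
        ∏' p : Nat.Primes, (1 + χ ((p : ℕ) : ZMod n) *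
          ((p : ℕ) : ℂ) ^ (-(s + ((k + 1 + 1 : ℕ) : ℂ) * t)))⁻¹ := by
      rw [Erec]
      have : ((k + 1 + 1 : ℕ) : ℂ) = (k : ℂ) + 2 := by push_cast; ring
      rw [this]
    rw [e, e2, mul_mul_mul_comm, h2, mul_one]
end
end
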